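/- arXiv:1809.10439 — 10 statements merged into one kernel-verified Lean document; each statement's English description precedes it below -/
import Mathlib

section
/- Let b be a nonzero complex number. For every z ∈ ℂ with b² + 1 − 2bz ≠ 0, the quotient (z − b)²/(b² + 1 − 2bz) is a real number lying in [0,1] if and only if there exist ρ ∈ [0,1] and s ∈ ℂ with s² = ρ(1 − b² + b²ρ) and z = b(1 − ρ) + s. -/
-- Both sides are the same quadratic equation in `z`; the second has its square completed.
theorem sub_sq_eq_mul_iff_sub_sq_eq {R : Type*} [CommRing R] (b ρ z : R) :
    (z - b) ^ 2 = ρ * (b ^ 2 + 1 - 2 * b * z) ↔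
      (z - b * (1 - ρ)) ^ 2 = ρ * (1 - b ^ 2 + b ^ 2 * ρ) := by
  constructor <;> intro h <;> linear_combination h

theorem stmt_1_general {K : Type*} [Field K] {b z : K} (hz : b ^ 2 + 1 - 2 * b * z ≠ 0) (ρ : K) :
    (z - b) ^ 2 / (b ^ 2 + 1 - 2 * b * z) = ρ ↔
      ∃ s : K, s ^ 2 = ρ * (1 - b ^ 2 + b ^ 2 * ρ) ∧ z = b * (1 - ρ) + s := by
  simp only [← sub_eq_iff_eq_add', exists_eq_right']
  rw [div_eq_iff hz, sub_sq_eq_mul_iff_sub_sq_eq]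

/-- For `b ≠ 0` and `z` with `b² + 1 − 2bz ≠ 0`, the quotient
`(z − b)² / (b² + 1 − 2bz)` is a real number in `[0,1]` iff there exist `ρ ∈ [0,1]` and
`s ∈ ℂ` with `s² = ρ(1 − b² + b²ρ)` and `z = b(1 − ρ) + s`. -/
theorem stmt_1 (b : ℂ) (hb : b ≠ 0) :
    ∀ z : ℂ, b ^ 2 + 1 - 2 * b * z ≠ 0 →
      ((∃ r : ℝ, r ∈ Set.Icc (0 : ℝ) 1 ∧
          (z - b) ^ 2 / (b ^ 2 + 1 - 2 * b * z) = (r : ℂ)) ↔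
        (∃ ρ : ℝ, ρ ∈ Set.Icc (0 : ℝ) 1 ∧ ∃ s : ℂ,
          s ^ 2 = (ρ : ℂ) * (1 - b ^ 2 + b ^ 2 * (ρ : ℂ)) ∧
          z = b * (1 - (ρ : ℂ)) + s)) := by
  intro z hz
  exact exists_congr fun ρ => and_congr_right fun _ => stmt_1_general hz (ρ : ℂ)
end

section
/- Let b ∈ ℂ with Re b < 0. Then 1/b belongs to the set 𝒜 = {z ∈ ℂ : ∃ρ ∈ [0,1], ∃s ∈ ℂ, s² = ρ(1 − b² + b²ρ) and z = b(1 − ρ) + s} if and only if b is real and b ≤ −1. -/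
/-!
Eliminating `s` turns membership of `z` in `𝒜` into `(z - b)² = ρ (b² + 1 - 2bz)` for some
`ρ ∈ [0, 1]`. At `z = 1 / b` the right-hand factor is `b² - 1` and `b² (z - b)² = (b² - 1)²`, so the
equation splits into `b² = 1` or `b² (1 - ρ) = 1`. Such a `ρ` exists exactly when `b²` is real and
at least `1`, that is, when `b` is real with `|b| ≥ 1`.
-/

lemma exists_sq_eq_and_eq_add_iff_sub_sq_eq {R : Type*} [CommRing R] (b r z : R) :
    (∃ s, s ^ 2 = r * (1 - b ^ 2 + b ^ 2 * r) ∧ z = b * (1 - r) + s) ↔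
      (z - b) ^ 2 = r * (b ^ 2 + 1 - 2 * b * z) := by
  constructor
  · rintro ⟨s, hs, rfl⟩
    linear_combination hs
  · intro h
    exact ⟨z - b * (1 - r), by linear_combination h, by ring⟩

lemma one_div_sub_sq_eq_iff {K : Type*} [Field K] {b : K} (hb : b ≠ 0) (r : K) :
    (1 / b - b) ^ 2 = r * (b ^ 2 + 1 - 2 * b * (1 / b)) ↔ b ^ 2 = 1 ∨ b ^ 2 * (1 - r) = 1 := by
  have factorization : b ^ 2 * ((1 / b - b) ^ 2 - r * (b ^ 2 + 1 - 2 * b * (1 / b))) =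
      (b ^ 2 - 1) * (b ^ 2 * (1 - r) - 1) := by
    field_simp
    ring
  rw [← sub_eq_zero, ← mul_eq_zero_iff_left (pow_ne_zero 2 hb), factorization, mul_eq_zero,
    sub_eq_zero, sub_eq_zero]

section ComplexOrder

open scoped ComplexOrder

lemma exists_mem_Icc_mul_one_sub_eq_one_iff_one_le {z : ℂ} :
    (∃ ρ ∈ Set.Icc (0 : ℝ) 1, z * (1 - (ρ : ℂ)) = 1) ↔ 1 ≤ z := by
  constructor
  · rintro ⟨ρ, ⟨hρ₀, hρ₁⟩, h⟩
    have hρ : ρ ≠ 1 := by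
      rintro rfl
      simp at h
    have hpos : 0 < 1 - ρ := sub_pos.2 (hρ₁.lt_of_ne hρ)
    have hz : z = ((1 - ρ)⁻¹ : ℝ) := by
      push_cast
      exact eq_inv_of_mul_eq_one_left h
    rw [hz]
    exact_mod_cast (one_le_inv₀ hpos).2 (sub_le_self 1 hρ₀)
  · intro h
    obtain ⟨c, rfl⟩ : ∃ c : ℝ, z = c := ⟨z.re, Complex.eq_re_of_ofReal_le (r := 1) (by simpa)⟩
    have hc : 1 ≤ c := by exact_mod_cast h
    refine ⟨1 - c⁻¹, ⟨sub_nonneg.2 (inv_le_one_of_one_le₀ hc),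
      sub_le_self 1 (inv_nonneg.2 (zero_le_one.trans hc))⟩, ?_⟩
    have hc₀ : c ≠ 0 := by positivity
    norm_cast
    rw [sub_sub_cancel, mul_inv_cancel₀ hc₀]

lemma one_le_sq_iff_im_eq_zero_and_one_le_abs_re {b : ℂ} :
    1 ≤ b ^ 2 ↔ b.im = 0 ∧ 1 ≤ |b.re| := by
  have hre : (b ^ 2).re = b.re ^ 2 - b.im ^ 2 := by simp [sq]
  have him : (b ^ 2).im = 2 * (b.re * b.im) := by rw [sq, Complex.mul_im]; ring
  rw [Complex.le_def, Complex.one_re, Complex.one_im, hre, him, ← one_le_sq_iff_one_le_abs]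
  constructor
  · rintro ⟨h_re, h_im⟩
    have hb : b.re ≠ 0 := by
      intro h
      nlinarith [sq_nonneg b.im]
    have hb_im : b.im = 0 := by simpa [hb] using h_im
    exact ⟨hb_im, by simpa [hb_im] using h_re⟩
  · rintro ⟨h_im, h_re⟩
    simpa [h_im] using h_re

theorem stmt_2_general {b : ℂ} (hb : b ≠ 0) :
    1 / b ∈ {z : ℂ | ∃ ρ : ℝ, ρ ∈ Set.Icc (0 : ℝ) 1 ∧ ∃ s : ℂ,
      s ^ 2 = (ρ : ℂ) * (1 - b ^ 2 + b ^ 2 * (ρ : ℂ)) ∧ z = b * (1 - (ρ : ℂ)) + s} ↔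
      b.im = 0 ∧ 1 ≤ |b.re| := by
  simp only [Set.mem_ofPred_eq, exists_sq_eq_and_eq_add_iff_sub_sq_eq, one_div_sub_sq_eq_iff hb]
  rw [← one_le_sq_iff_im_eq_zero_and_one_le_abs_re,
    ← exists_mem_Icc_mul_one_sub_eq_one_iff_one_le]
  constructor
  · rintro ⟨ρ, hρ, h | h⟩
    · exact ⟨0, by simp, by simpa using h⟩
    · exact ⟨ρ, hρ, h⟩
  · rintro ⟨ρ, hρ, h⟩
    exact ⟨ρ, hρ, Or.inr h⟩

end ComplexOrder

/-- Let `b ∈ ℂ` with `Re b < 0`. Then `1/b` belongs to the set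
`𝒜 = {z : ∃ ρ ∈ [0,1], ∃ s, s² = ρ(1 − b² + b²ρ) ∧ z = b(1 − ρ) + s}` iff `b` is real
and `b ≤ −1`. -/
theorem stmt_2 (b : ℂ) (hb : b.re < 0)
    (A : Set ℂ)
    (hA : A = {z : ℂ | ∃ ρ : ℝ, ρ ∈ Set.Icc (0 : ℝ) 1 ∧ ∃ s : ℂ,
      s ^ 2 = (ρ : ℂ) * (1 - b ^ 2 + b ^ 2 * (ρ : ℂ)) ∧ z = b * (1 - (ρ : ℂ)) + s}) :
    1 / b ∈ A ↔ (b.im = 0 ∧ b.re ≤ -1) := by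
  have hb₀ : b ≠ 0 := fun h ↦ hb.ne (by simp [h])
  rw [hA, stmt_2_general hb₀, abs_of_neg hb, le_neg]
end

section
/- Let b ∈ ℂ with Re b < 0. The intersection 𝒜 ∩ C_b is nonempty if and only if Re b ≤ −1/2; moreover, when it is nonempty it consists of exactly one point i_b. -/
/-!
Choose a square root `y` of `1 - 2bz + b²`. Membership of `z` in the circle says `‖y‖ = ‖b‖`, and
membership in `𝒜` says `1 - b² - y² = 2tby` for some real `t` with `|t| ≤ 1`. If `‖y‖ = ‖b‖`, then
`b² + y²` is a real multiple of `by`, hence so is `1`: the product `by` is real, which forces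
`y = ± conj b` and determines `z`. For that `z` the remaining condition reads
`|1 - 2 Re b²| ≤ 2 ‖b‖²`, that is `|Re b| ≥ 1/2`.
-/

section

open ComplexConjugate

/-- The set `𝒜` attached to `b`: the locus where `(z - b)² / (1 - 2bz + b²)` takes a value `ρ` in
`[0, 1]`, encoded by solving this quadratic equation for `z`. -/
def unitRatioLocus (b : ℂ) : Set ℂ :=
  {z | ∃ ρ : ℝ, ρ ∈ Set.Icc (0 : ℝ) 1 ∧ ∃ s : ℂ,
    s ^ 2 = (ρ : ℂ) * (1 - b ^ 2 + b ^ 2 * (ρ : ℂ)) ∧ z = b * (1 - (ρ : ℂ)) + s}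

/-- The circle `C_b`, on which `‖1 - 2bz + b²‖ = ‖b‖²` when `b ≠ 0`. -/
noncomputable def joukowskiCircle (b : ℂ) : Set ℂ :=
  Metric.sphere ((b + 1 / b) / 2) (‖b‖ / 2)

/-- The candidate `i_b` for the intersection of `𝒜` with `C_b`: the solution `z` of
`1 - 2bz + b² = (conj b)²`, for `b ≠ 0`. -/
noncomputable def crossingPoint (b : ℂ) : ℂ :=
  (1 + b ^ 2 - conj b ^ 2) / (2 * b)

variable {b u v y z : ℂ}

theorem sq_add_sq_eq_of_norm_eq (h : ‖u‖ = ‖v‖) :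
    u ^ 2 + v ^ 2 = (2 * (u / v).re : ℝ) * (u * v) := by
  rcases eq_or_ne v 0 with rfl | hv
  · obtain rfl : u = 0 := by simpa only [norm_zero, norm_eq_zero] using h
    simp
  have hu : u ≠ 0 := norm_ne_zero_iff.1 (h ▸ norm_ne_zero_iff.2 hv)
  have hnorm : ‖u / v‖ = 1 := by rw [norm_div, h, div_self (norm_ne_zero_iff.2 hv)]
  have hre : ((2 * (u / v).re : ℝ) : ℂ) = u / v + v / u := by
    rw [← Complex.add_conj, ← Complex.inv_eq_conj hnorm, inv_div]
  rw [hre]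
  field_simp

theorem sq_eq_conj_sq_of_norm_eq_of_mul_im_eq_zero (h : ‖u‖ = ‖v‖) (him : (u * v).im = 0) :
    v ^ 2 = conj u ^ 2 := by
  rcases eq_or_ne u 0 with rfl | hu
  · obtain rfl : v = 0 := by simpa only [norm_zero, eq_comm, norm_eq_zero] using h
    rw [map_zero]
  have hreal : conj u * conj v = u * v := by rw [← map_mul, Complex.conj_eq_iff_im.2 him]
  have hnorm : u * conj u = v * conj v := by simp only [Complex.mul_conj', h]
  refine mul_left_cancel₀ hu ?_
  linear_combination -v * hreal - conj u * hnorm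

theorem sq_eq_conj_sq_of_one_sub_sq_sub_sq_eq (h : ‖b‖ = ‖y‖) {t : ℝ}
    (ht : 1 - b ^ 2 - y ^ 2 = 2 * t * b * y) : y ^ 2 = conj b ^ 2 := by
  have hone : ((2 * (b / y).re + 2 * t : ℝ) : ℂ) * (b * y) = 1 := by
    rw [Complex.ofReal_add, add_mul, ← sq_add_sq_eq_of_norm_eq h]
    push_cast
    linear_combination -ht
  refine sq_eq_conj_sq_of_norm_eq_of_mul_im_eq_zero h ?_
  rw [eq_inv_of_mul_eq_one_right hone, ← Complex.ofReal_inv, Complex.ofReal_im]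

theorem mem_unitRatioLocus_iff_exists_sub_sq_eq :
    z ∈ unitRatioLocus b ↔
      ∃ ρ : ℝ, ρ ∈ Set.Icc (0 : ℝ) 1 ∧ (z - b) ^ 2 = ρ * (1 - 2 * b * z + b ^ 2) := by
  refine exists_congr fun ρ => and_congr_right fun _ => ⟨?_, fun h => ?_⟩
  · rintro ⟨s, hs, rfl⟩
    linear_combination hs
  · exact ⟨z - b * (1 - ρ), by linear_combination h, by ring⟩

theorem mem_unitRatioLocus_iff_exists_abs_le_one (hb : b ≠ 0)
    (hy : y ^ 2 = 1 - 2 * b * z + b ^ 2) :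
    z ∈ unitRatioLocus b ↔ ∃ t : ℝ, |t| ≤ 1 ∧ 1 - b ^ 2 - y ^ 2 = 2 * t * b * y := by
  have hsub : 1 - b ^ 2 - y ^ 2 = 2 * b * (z - b) := by rw [hy]; ring
  have hlinear (t : ℝ) : 1 - b ^ 2 - y ^ 2 = 2 * t * b * y ↔ z - b = t * y := by
    rw [hsub, show 2 * t * b * y = 2 * b * (t * y) by ring,
      mul_right_inj' (mul_ne_zero two_ne_zero hb)]
  simp only [mem_unitRatioLocus_iff_exists_sub_sq_eq, hlinear, ← hy]
  constructor
  · rintro ⟨ρ, ⟨hρ₀, hρ₁⟩, h⟩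
    have hsqrt : |√ρ| ≤ 1 := by
      rwa [abs_of_nonneg (Real.sqrt_nonneg ρ), Real.sqrt_le_one]
    rw [← Real.sq_sqrt hρ₀, Complex.ofReal_pow, ← mul_pow, sq_eq_sq_iff_eq_or_eq_neg] at h
    rcases h with h | h
    · exact ⟨√ρ, hsqrt, h⟩
    · exact ⟨-√ρ, by rwa [abs_neg], by rw [h, Complex.ofReal_neg, neg_mul]⟩
  · rintro ⟨t, ht, h⟩
    exact ⟨t ^ 2, ⟨sq_nonneg t, (sq_le_one_iff_abs_le_one t).2 ht⟩,
      by rw [h, mul_pow, Complex.ofReal_pow]⟩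

theorem mem_joukowskiCircle_iff_norm_eq (hb : b ≠ 0) (hy : y ^ 2 = 1 - 2 * b * z + b ^ 2) :
    z ∈ joukowskiCircle b ↔ ‖b‖ = ‖y‖ := by
  have hsub : z - (b + 1 / b) / 2 = -(y ^ 2 / (2 * b)) := by
    rw [hy]
    field_simp
    ring
  have hb₂ : 2 * ‖b‖ ≠ 0 := mul_ne_zero two_ne_zero (norm_ne_zero_iff.2 hb)
  rw [joukowskiCircle, mem_sphere_iff_norm, hsub, norm_neg, norm_div, norm_pow, norm_mul,
    Complex.norm_ofNat, div_eq_div_iff hb₂ two_ne_zero,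
    ← sq_eq_sq₀ (norm_nonneg b) (norm_nonneg y)]
  constructor <;> intro h <;> linarith

theorem eq_crossingPoint_iff (hb : b ≠ 0) :
    z = crossingPoint b ↔ conj b ^ 2 = 1 - 2 * b * z + b ^ 2 := by
  rw [crossingPoint, eq_div_iff (mul_ne_zero two_ne_zero hb)]
  constructor <;> intro h <;> linear_combination h

theorem unitRatioLocus_inter_joukowskiCircle_subset (hb : b ≠ 0) :
    unitRatioLocus b ∩ joukowskiCircle b ⊆ {crossingPoint b} := by
  rintro z ⟨hlocus, hcircle⟩
  obtain ⟨y, hy⟩ := IsAlgClosed.exists_pow_nat_eq (1 - 2 * b * z + b ^ 2) two_pos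
  obtain ⟨t, -, ht⟩ := (mem_unitRatioLocus_iff_exists_abs_le_one hb hy).1 hlocus
  have hnorm : ‖b‖ = ‖y‖ := (mem_joukowskiCircle_iff_norm_eq hb hy).1 hcircle
  rw [Set.mem_singleton_iff, eq_crossingPoint_iff hb, ← hy]
  exact (sq_eq_conj_sq_of_one_sub_sq_sub_sq_eq hnorm ht).symm

theorem crossingPoint_mem_joukowskiCircle (hb : b ≠ 0) : crossingPoint b ∈ joukowskiCircle b :=
  (mem_joukowskiCircle_iff_norm_eq hb ((eq_crossingPoint_iff hb).1 rfl)).2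
    (Complex.norm_conj b).symm

theorem abs_one_sub_two_mul_re_sq_le_iff :
    |1 - 2 * (b ^ 2).re| ≤ 2 * Complex.normSq b ↔ 1 / 2 ≤ |b.re| := by
  have habs : 1 / 2 ≤ |b.re| ↔ 1 ≤ 4 * b.re ^ 2 := by
    rw [← abs_of_pos (one_half_pos (α := ℝ)), ← sq_le_sq]
    constructor <;> intro h <;> linarith
  have hre : (b ^ 2).re = b.re ^ 2 - b.im ^ 2 := by rw [sq, Complex.mul_re, ← sq, ← sq]
  rw [habs, abs_le, Complex.normSq_apply, hre]
  constructor
  · rintro ⟨-, h⟩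
    linarith
  · intro h
    constructor <;> nlinarith [sq_nonneg b.im]

theorem crossingPoint_mem_unitRatioLocus_iff (hb : b ≠ 0) :
    crossingPoint b ∈ unitRatioLocus b ↔ 1 / 2 ≤ |b.re| := by
  have hpos : 0 < 2 * Complex.normSq b := mul_pos two_pos (Complex.normSq_pos.2 hb)
  have hreal : 1 - b ^ 2 - conj b ^ 2 = (1 - 2 * (b ^ 2).re : ℝ) := by
    rw [sub_sub, ← map_pow, Complex.add_conj, Complex.ofReal_sub, Complex.ofReal_one]
  have hscale (t : ℝ) :
      1 - b ^ 2 - conj b ^ 2 = 2 * t * b * conj b ↔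
        (1 - 2 * (b ^ 2).re) / (2 * Complex.normSq b) = t := by
    rw [hreal, mul_assoc, Complex.mul_conj, div_eq_iff hpos.ne', ← Complex.ofReal_inj]
    push_cast
    ring_nf
  simp only [mem_unitRatioLocus_iff_exists_abs_le_one hb ((eq_crossingPoint_iff hb).1 rfl),
    hscale, exists_eq_right']
  rw [abs_div, abs_of_pos hpos, div_le_one hpos, abs_one_sub_two_mul_re_sq_le_iff]

end

theorem stmt_3_general {b : ℂ} (hb : b ≠ 0) :
    ((unitRatioLocus b ∩ joukowskiCircle b).Nonempty ↔ 1 / 2 ≤ |b.re|) ∧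
      (1 / 2 ≤ |b.re| → unitRatioLocus b ∩ joukowskiCircle b = {crossingPoint b}) := by
  have hsub := unitRatioLocus_inter_joukowskiCircle_subset hb
  have hmem : crossingPoint b ∈ unitRatioLocus b ∩ joukowskiCircle b ↔ 1 / 2 ≤ |b.re| := by
    rw [Set.mem_inter_iff, crossingPoint_mem_unitRatioLocus_iff hb,
      and_iff_left (crossingPoint_mem_joukowskiCircle hb)]
  refine ⟨⟨?_, fun h => ⟨_, hmem.2 h⟩⟩,
    fun h => hsub.antisymm (Set.singleton_subset_iff.2 (hmem.2 h))⟩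
  rintro ⟨z, hz⟩
  exact hmem.1 (hsub hz ▸ hz)

/-- Let `b ∈ ℂ` with `Re b < 0`. The intersection `𝒜 ∩ C_b` is nonempty iff
`Re b ≤ −1/2`; moreover, when it is nonempty it consists of exactly one point `i_b`. -/
theorem stmt_3 (b : ℂ) (hb : b.re < 0)
    (A : Set ℂ)
    (hA : A = {z : ℂ | ∃ ρ : ℝ, ρ ∈ Set.Icc (0 : ℝ) 1 ∧ ∃ s : ℂ,
      s ^ 2 = (ρ : ℂ) * (1 - b ^ 2 + b ^ 2 * (ρ : ℂ)) ∧ z = b * (1 - (ρ : ℂ)) + s})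
    (c : ℂ) (hc : c = (b + 1 / b) / 2)
    (Cb : Set ℂ) (hCb : Cb = {z : ℂ | ‖z - c‖ = ‖b‖ / 2}) :
    ((A ∩ Cb).Nonempty ↔ b.re ≤ -1/2) ∧
      (b.re ≤ -1/2 → ∃ ib : ℂ, A ∩ Cb = {ib}) := by
  obtain rfl : A = unitRatioLocus b := hA
  obtain rfl : Cb = joukowskiCircle b := by
    ext z
    rw [hCb, hc, joukowskiCircle, mem_sphere_iff_norm, Set.mem_ofPred_eq]
  have habs : b.re ≤ -1/2 ↔ 1 / 2 ≤ |b.re| := by rw [abs_of_neg hb, le_neg, neg_div]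
  obtain ⟨hiff, heq⟩ := stmt_3_general (b := b) fun h => hb.ne (congrArg Complex.re h)
  exact ⟨hiff.trans habs.symm, fun h => ⟨_, heq (habs.1 h)⟩⟩
end

section
/- Let b be real with b ≤ −1/2. Then 𝒜 ∩ C_b = {1/(2b)}, i.e., the unique intersection point of the arc 𝒜 and the circle C_b is i_b = 1/(2b). -/
/-!
Write a point of `C_b` as `z = c - bζ/2` with `|ζ| = 1`. Since `(z - b)² = ρ(b² + 1 - 2bz)` on the
arc, `z` lies on it iff `(κ - ζ)² = 4ρζ` for some `ρ ∈ [0, 1]`, where `κ = 1/b² - 1 ≠ -1`. Taking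
norms gives `4ρ = |κ - ζ|² = (κ - ζ) * conj (κ - ζ)`, so either `ζ = κ` or
`κ - ζ = conj (κ - ζ) * ζ = κζ - 1`; both force `ζ = 1`, that is `z = 1/(2b)`.
For `ζ = 1` the parameter is `ρ = (κ - 1)²/4`, which is at most `1` exactly when `1/2 ≤ |b|`.
-/

open ComplexConjugate

/-- The arc `𝒜` with real parameter `b`: the roots `z` of the quadratic equations
`(z - b)² = ρ(b² + 1 - 2bz)`, `ρ ∈ [0, 1]`, in solved form, `s` being either square root of the
reduced discriminant. -/
def arc (b : ℝ) : Set ℂ :=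
  {z : ℂ | ∃ ρ : ℝ, ρ ∈ Set.Icc (0 : ℝ) 1 ∧ ∃ s : ℂ,
    s ^ 2 = (ρ : ℂ) * (1 - (b : ℂ) ^ 2 + (b : ℂ) ^ 2 * (ρ : ℂ)) ∧
    z = (b : ℂ) * (1 - (ρ : ℂ)) + s}

/-- The circle `C_b`; it is meaningful for `b ≠ 0` only. -/
def arcCircle (b : ℝ) : Set ℂ :=
  {z : ℂ | ‖z - ((b : ℂ) + 1 / b) / 2‖ = ‖(b : ℂ)‖ / 2}

/-- The affine parametrization of `C_b` by the unit circle, oriented so that `ζ = 1` gives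
`1/(2b)`. -/
noncomputable def arcCirclePoint (b : ℝ) (ζ : ℂ) : ℂ :=
  ((b : ℂ) + 1 / b) / 2 - b / 2 * ζ

theorem arcCirclePoint_one (b : ℝ) : arcCirclePoint b 1 = 1 / (2 * b) := by
  rw [arcCirclePoint]
  ring

theorem mem_arc_iff {b : ℝ} {z : ℂ} :
    z ∈ arc b ↔ ∃ ρ ∈ Set.Icc (0 : ℝ) 1, (z - b) ^ 2 = ρ * (b ^ 2 + 1 - 2 * b * z) := by
  refine exists_congr fun ρ ↦ and_congr_right fun _ ↦ ⟨?_, fun h ↦ ?_⟩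
  · rintro ⟨s, hs, rfl⟩
    linear_combination hs
  · exact ⟨z - b * (1 - ρ), by linear_combination h, by ring⟩

theorem arcCirclePoint_mem_arcCircle_iff {b : ℝ} (hb : b ≠ 0) {ζ : ℂ} :
    arcCirclePoint b ζ ∈ arcCircle b ↔ ‖ζ‖ = 1 := by
  have norm_half_ne_zero : ‖(b : ℂ) / 2‖ ≠ 0 := by simpa using hb
  have norm_half : ‖(b : ℂ)‖ / 2 = ‖(b : ℂ) / 2‖ := by simp
  rw [arcCircle, arcCirclePoint, Set.mem_ofPred_eq, sub_sub_cancel_left, norm_neg, norm_mul,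
    norm_half, mul_eq_left₀ norm_half_ne_zero]

theorem arcCirclePoint_surjective {b : ℝ} (hb : b ≠ 0) :
    Function.Surjective (arcCirclePoint b) := by
  have hb' : (b : ℂ) ≠ 0 := Complex.ofReal_ne_zero.mpr hb
  intro z
  refine ⟨2 / b * (((b : ℂ) + 1 / b) / 2 - z), ?_⟩
  rw [arcCirclePoint]
  field_simp
  ring

theorem arcCirclePoint_mem_arc_iff {b : ℝ} (hb : b ≠ 0) {ζ : ℂ} :
    arcCirclePoint b ζ ∈ arc b ↔
      ∃ ρ ∈ Set.Icc (0 : ℝ) 1, (((1 / b ^ 2 - 1 : ℝ) : ℂ) - ζ) ^ 2 = (4 * ρ : ℝ) * ζ := by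
  have hb' : (b : ℂ) ≠ 0 := Complex.ofReal_ne_zero.mpr hb
  have sub_eq : arcCirclePoint b ζ - b = b / 2 * (((1 / b ^ 2 - 1 : ℝ) : ℂ) - ζ) := by
    rw [arcCirclePoint]
    push_cast
    field_simp
    ring
  have factor_eq : (b : ℂ) ^ 2 + 1 - 2 * b * arcCirclePoint b ζ = b ^ 2 * ζ := by
    rw [arcCirclePoint]
    field_simp
    ring
  rw [mem_arc_iff]
  refine exists_congr fun ρ ↦ and_congr_right fun _ ↦ ?_
  have scale_eq : (ρ : ℂ) * (b ^ 2 * ζ) = (b / 2) ^ 2 * ((4 * ρ : ℝ) * ζ) := by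
    push_cast
    ring
  rw [sub_eq, factor_eq, scale_eq, mul_pow,
    mul_right_inj' (pow_ne_zero 2 (div_ne_zero hb' two_ne_zero))]

theorem eq_one_of_ofReal_sub_sq_eq {κ r : ℝ} {ζ : ℂ} (hκ : κ ≠ -1) (hr : 0 ≤ r)
    (hζ : ‖ζ‖ = 1) (h : ((κ : ℂ) - ζ) ^ 2 = r * ζ) : ζ = 1 := by
  rcases eq_or_ne (κ : ℂ) ζ with rfl | hne
  · rw [Complex.norm_real, Real.norm_eq_abs, abs_eq zero_le_one] at hζ
    exact_mod_cast hζ.resolve_right hκ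
  have norm_sq : ‖(κ : ℂ) - ζ‖ ^ 2 = r := by
    simpa [hζ, abs_of_nonneg hr] using congrArg norm h
  have reflect : (κ : ℂ) - ζ = conj ((κ : ℂ) - ζ) * ζ := by
    refine mul_left_cancel₀ (sub_ne_zero.mpr hne) ?_
    rw [← sq, h, ← mul_assoc, Complex.mul_conj', ← norm_sq, Complex.ofReal_pow]
  have unit : conj ζ * ζ = 1 := by simp [Complex.conj_mul', hζ]
  have add_one_ne_zero : (κ : ℂ) + 1 ≠ 0 := by
    exact_mod_cast mt eq_neg_of_add_eq_zero_left hκ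
  refine mul_left_cancel₀ add_one_ne_zero ?_
  rw [map_sub, Complex.conj_ofReal] at reflect
  linear_combination unit - reflect

theorem arc_inter_arcCircle_subset {b : ℝ} (hb : b ≠ 0) :
    arc b ∩ arcCircle b ⊆ {(1 / (2 * b) : ℂ)} := by
  rintro z ⟨z_mem_arc, z_mem_circle⟩
  obtain ⟨ζ, rfl⟩ := arcCirclePoint_surjective hb z
  obtain ⟨ρ, ⟨ρ_nonneg, -⟩, hρ⟩ := (arcCirclePoint_mem_arc_iff hb).mp z_mem_arc
  have inv_sq_pos : 0 < 1 / b ^ 2 := by positivity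
  have κ_ne_neg_one : 1 / b ^ 2 - 1 ≠ -1 := by linarith
  have ζ_eq_one : ζ = 1 := eq_one_of_ofReal_sub_sq_eq κ_ne_neg_one (by positivity)
    ((arcCirclePoint_mem_arcCircle_iff hb).mp z_mem_circle) hρ
  rw [ζ_eq_one, arcCirclePoint_one, Set.mem_singleton_iff]

theorem one_div_two_mul_mem_arcCircle {b : ℝ} (hb : b ≠ 0) :
    (1 / (2 * b) : ℂ) ∈ arcCircle b := by
  rw [← arcCirclePoint_one, arcCirclePoint_mem_arcCircle_iff hb, norm_one]

theorem one_div_two_mul_mem_arc_iff {b : ℝ} (hb : b ≠ 0) :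
    (1 / (2 * b) : ℂ) ∈ arc b ↔ 1 / 2 ≤ |b| := by
  have inv_sq_pos : 0 < 1 / b ^ 2 := by positivity
  have inv_sq_le_four_iff : 1 / b ^ 2 ≤ 4 ↔ 1 / 2 ≤ |b| := by
    rw [one_div_le (by positivity) four_pos, ← abs_of_pos (one_half_pos (α := ℝ)), ← sq_le_sq]
    norm_num
  rw [← arcCirclePoint_one, arcCirclePoint_mem_arc_iff hb, ← inv_sq_le_four_iff]
  constructor
  · rintro ⟨ρ, ⟨-, ρ_le_one⟩, hρ⟩
    have hρ' : (1 / b ^ 2 - 1 - 1) ^ 2 = 4 * ρ * 1 := by exact_mod_cast hρ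
    nlinarith
  · intro inv_sq_le_four
    refine ⟨(1 / b ^ 2 - 2) ^ 2 / 4, ⟨by positivity, by nlinarith⟩, ?_⟩
    push_cast
    ring

theorem stmt_4_general {b : ℝ} (hb : b ≠ 0) :
    arc b ∩ arcCircle b = {(1 / (2 * b) : ℂ)} ↔ 1 / 2 ≤ |b| := by
  rw [Set.Subset.antisymm_iff, and_iff_right (arc_inter_arcCircle_subset hb),
    Set.singleton_subset_iff, Set.mem_inter_iff,
    and_iff_left (one_div_two_mul_mem_arcCircle hb), one_div_two_mul_mem_arc_iff hb]

/-- Let `b` be real with `b ≤ −1/2`. Then `𝒜 ∩ C_b = {1/(2b)}`: the unique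
intersection point of the arc `𝒜` and the circle `C_b` is `i_b = 1/(2b)`. -/
theorem stmt_4 (b : ℝ) (hb : b ≤ -1/2)
    (A : Set ℂ)
    (hA : A = {z : ℂ | ∃ ρ : ℝ, ρ ∈ Set.Icc (0 : ℝ) 1 ∧ ∃ s : ℂ,
      s ^ 2 = (ρ : ℂ) * (1 - (b : ℂ) ^ 2 + (b : ℂ) ^ 2 * (ρ : ℂ)) ∧
      z = (b : ℂ) * (1 - (ρ : ℂ)) + s})
    (c : ℂ) (hc : c = ((b : ℂ) + 1 / (b : ℂ)) / 2)
    (Cb : Set ℂ) (hCb : Cb = {z : ℂ | ‖z - c‖ = ‖(b : ℂ)‖ / 2}) :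
    A ∩ Cb = {(1 / (2 * b) : ℂ)} := by
  subst hA hc hCb
  exact (stmt_4_general (by linarith)).mpr (le_abs.mpr (Or.inr (by linarith)))
end

section
/- Let b ∈ ℂ with Re b ≤ −1/2 (so Re b < 0). Define L_b = {z ∈ ℂ : ∃s ∈ ℂ, s² = z² − 1 and |b − z − s| = |b|}. Then L_b ∩ C_b consists of exactly one point; this point equals the unique point i_b of 𝒜 ∩ C_b; and moreover L_b ∩ 𝒜 = L_b ∩ C_b = {i_b}. -/
/-!
Put `z = (w + w⁻¹) / 2`. Then `𝒜` says that `w` and `w⁻¹` are equidistant from `b`, `C_b` says that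
the product of their distances to `b` is `|b|²`, and `L_b` says that one of them is at distance
`|b|` from `b`. Any two of these conditions put both `w` and `w⁻¹` on the circle about `b` through
`0`. Inversion maps this circle to a line, so this means that `b * w` and `b * w⁻¹` both have real
part `1 / 2`. Their product is `b ^ 2`, whose imaginary part determines their sum `2 * b * z` and
hence `z`; they exist because `b ^ 2` is not inside the parabola that squaring makes of the line
`re = 1 / 2`.
-/

open Complex Set

section EqualNorms

lemma sub_exp_mul_sub_exp_neg_mul (u v θ : ℂ) :
    (u - exp (θ * I) * v) * (u - exp (-θ * I) * v) = (u + v) ^ 2 - 2 * (1 + cos θ) * (u * v) := by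
  have exp_mul_exp_neg : exp (θ * I) * exp (-θ * I) = 1 := by rw [← exp_add]; simp
  linear_combination u * v * two_cos θ + v ^ 2 * exp_mul_exp_neg

lemma norm_eq_norm_iff_exists_eq_exp_mul {u v : ℂ} :
    ‖u‖ = ‖v‖ ↔ ∃ θ : ℝ, u = exp (θ * I) * v := by
  constructor
  · intro h
    refine ⟨arg u - arg v, ?_⟩
    calc u = ‖v‖ * exp (arg u * I) := by rw [← h, norm_mul_exp_arg_mul_I]
      _ = exp ((arg u - arg v) * I) * (‖v‖ * exp (arg v * I)) := by
        rw [mul_left_comm, ← exp_add]; ring_nf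
      _ = exp (↑(arg u - arg v) * I) * v := by rw [norm_mul_exp_arg_mul_I]; norm_cast
  · rintro ⟨θ, rfl⟩
    rw [norm_mul, norm_exp_ofReal_mul_I, one_mul]

lemma norm_eq_norm_iff_exists_add_sq_eq {u v : ℂ} :
    ‖u‖ = ‖v‖ ↔ ∃ ρ ∈ Icc (0 : ℝ) 1, (u + v) ^ 2 = 4 * ρ * (u * v) := by
  constructor
  · intro h
    obtain ⟨θ, hθ⟩ := norm_eq_norm_iff_exists_eq_exp_mul.1 h
    have factors := sub_exp_mul_sub_exp_neg_mul u v θ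
    rw [sub_eq_zero.2 hθ, zero_mul] at factors
    refine ⟨(1 + Real.cos θ) / 2, ⟨?_, ?_⟩, ?_⟩
    · linarith [Real.neg_one_le_cos θ]
    · linarith [Real.cos_le_one θ]
    · push_cast
      linear_combination -factors
  · rintro ⟨ρ, ⟨hρ₀, hρ₁⟩, h⟩
    have cos_arccos : Real.cos (Real.arccos (2 * ρ - 1)) = 2 * ρ - 1 :=
      Real.cos_arccos (by linarith) (by linarith)
    generalize Real.arccos (2 * ρ - 1) = θ at cos_arccos
    have factors : (u - exp (θ * I) * v) * (u - exp (-θ * I) * v) = 0 := by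
      rw [sub_exp_mul_sub_exp_neg_mul, ← ofReal_cos, cos_arccos, h]
      push_cast
      ring
    rcases mul_eq_zero.1 factors with h | h
    · exact norm_eq_norm_iff_exists_eq_exp_mul.2 ⟨θ, sub_eq_zero.1 h⟩
    · exact norm_eq_norm_iff_exists_eq_exp_mul.2 ⟨-θ, by simpa using sub_eq_zero.1 h⟩

end EqualNorms

section RealPartHalf

lemma norm_one_sub_eq_norm_iff {x : ℂ} : ‖1 - x‖ = ‖x‖ ↔ x.re = 1 / 2 := by
  rw [← sq_eq_sq₀ (norm_nonneg _) (norm_nonneg _), Complex.sq_norm, Complex.sq_norm, normSq_sub]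
  simp only [map_one, one_mul, conj_re]
  constructor <;> intro h <;> linarith

lemma norm_sub_eq_norm_iff_re_mul_inv {w b : ℂ} (hw : w ≠ 0) :
    ‖w - b‖ = ‖b‖ ↔ (b * w⁻¹).re = 1 / 2 := by
  have scale : ‖1 - b * w⁻¹‖ = ‖w - b‖ * ‖w⁻¹‖ := by
    rw [← norm_mul, sub_mul, mul_inv_cancel₀ hw]
  rw [← norm_one_sub_eq_norm_iff, scale, norm_mul,
    mul_left_inj' (norm_ne_zero_iff.2 (inv_ne_zero hw))]

lemma add_eq_one_add_two_im_mul {x y : ℂ} (hx : x.re = 1 / 2) (hy : y.re = 1 / 2) :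
    x + y = 1 + 2 * (x * y).im * I := by
  have im_mul : 2 * (x * y).im = x.im + y.im := by
    rw [mul_im, hx, hy]
    ring
  apply Complex.ext
  · norm_num [hx, hy]
  · simpa using im_mul.symm

lemma exists_re_eq_half_mul_eq {a : ℂ} (ha : 1 / 4 ≤ a.re + a.im ^ 2) :
    ∃ x y : ℂ, x.re = 1 / 2 ∧ y.re = 1 / 2 ∧ x * y = a := by
  have sq_sqrt : √(a.re + a.im ^ 2 - 1 / 4) ^ 2 = a.re + a.im ^ 2 - 1 / 4 :=
    Real.sq_sqrt (by linarith)
  generalize √(a.re + a.im ^ 2 - 1 / 4) = r at sq_sqrt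
  refine ⟨⟨1 / 2, a.im + r⟩, ⟨1 / 2, a.im - r⟩, rfl, rfl, Complex.ext ?_ ?_⟩
  · rw [mul_re]
    linear_combination sq_sqrt
  · rw [mul_im]
    ring

lemma quarter_le_re_sq_add_im_sq_sq {b : ℂ} (hb : 1 / 2 ≤ |b.re|) :
    1 / 4 ≤ (b ^ 2).re + (b ^ 2).im ^ 2 := by
  have quarter_le_sq : 1 / 4 ≤ b.re ^ 2 :=
    calc (1 / 4 : ℝ) = (1 / 2) ^ 2 := by norm_num
      _ ≤ |b.re| ^ 2 := by gcongr
      _ = b.re ^ 2 := sq_abs _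
  have factored : (b ^ 2).re + (b ^ 2).im ^ 2 - 1 / 4
      = 4 * (b.re ^ 2 - 1 / 4) * (b.im ^ 2 + 1 / 4) := by
    simp only [pow_two b, mul_re, mul_im]
    ring
  have : 0 ≤ 4 * (b.re ^ 2 - 1 / 4) * (b.im ^ 2 + 1 / 4) :=
    mul_nonneg (by linarith) (by positivity)
  linarith

end RealPartHalf

/-- The Joukowski map `w ↦ (w + w⁻¹) / 2`, used at `w ≠ 0`. The solutions of `s ^ 2 = z ^ 2 - 1`
at `z = joukowski w` are `s = ±(w - w⁻¹) / 2`, so that `{z + s, z - s} = {w, w⁻¹}`. -/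
noncomputable def joukowski (w : ℂ) : ℂ := (w + w⁻¹) / 2

section Joukowski

variable {w s b : ℂ}

lemma sq_eq_joukowski_sq_sub_one_iff (hw : w ≠ 0) :
    s ^ 2 = joukowski w ^ 2 - 1 ↔ joukowski w + s = w ∨ joukowski w + s = w⁻¹ := by
  have factored :
      s ^ 2 - (joukowski w ^ 2 - 1) = (joukowski w + s - w) * (joukowski w + s - w⁻¹) := by
    rw [joukowski]
    field_simp
    ring
  rw [← sub_eq_zero, factored, mul_eq_zero, sub_eq_zero, sub_eq_zero]

lemma exists_joukowski_eq (z : ℂ) : ∃ w ≠ 0, joukowski w = z := by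
  obtain ⟨s, hs⟩ := IsAlgClosed.exists_pow_nat_eq (z ^ 2 - 1) two_pos
  have mul_eq_one : (z + s) * (z - s) = 1 := by linear_combination -hs
  refine ⟨z + s, left_ne_zero_of_mul_eq_one mul_eq_one, ?_⟩
  rw [joukowski, inv_eq_of_mul_eq_one_right mul_eq_one]
  ring

lemma joukowski_sub_joukowski (hw : w ≠ 0) (hb : b ≠ 0) :
    joukowski w - joukowski b = -((w - b) * (w⁻¹ - b)) / (2 * b) := by
  rw [joukowski, joukowski]
  field_simp
  ring

end Joukowski

/-- The set `𝒜`. In the coordinate `w` with `z = joukowski w` it is the locus where `w` and `w⁻¹`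
are equidistant from `b`. -/
def equidistantArc (b : ℂ) : Set ℂ :=
  {z | ∃ ρ ∈ Icc (0 : ℝ) 1, ∃ s : ℂ,
    s ^ 2 = ρ * (1 - b ^ 2 + b ^ 2 * ρ) ∧ z = b * (1 - ρ) + s}

/-- The circle `C_b`, whose centre `(b + 1 / b) / 2` is `joukowski b`. -/
noncomputable def joukowskiCenteredCircle (b : ℂ) : Set ℂ :=
  {z | ‖z - joukowski b‖ = ‖b‖ / 2}

/-- The set `L_b`, which is the image under `joukowski` of the circle about `b` through `0`
(without the point `0`). -/
def joukowskiImageCircle (b : ℂ) : Set ℂ :=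
  {z | ∃ s : ℂ, s ^ 2 = z ^ 2 - 1 ∧ ‖b - z - s‖ = ‖b‖}

/-- The point `i_b`, which for `1 / 2 ≤ |b.re|` is the only `z = joukowski w` such that both `w` and
`w⁻¹` are at distance `‖b‖` from `b`. -/
noncomputable def commonPoint (b : ℂ) : ℂ := (1 / 2 + (b ^ 2).im * I) / b

section Membership

variable {w b : ℂ}

lemma joukowski_mem_equidistantArc_iff (hw : w ≠ 0) :
    joukowski w ∈ equidistantArc b ↔ ‖w - b‖ = ‖w⁻¹ - b‖ := by
  have quadratic (ρ : ℂ) :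
      4 * ((joukowski w - b * (1 - ρ)) ^ 2 - ρ * (1 - b ^ 2 + b ^ 2 * ρ))
        = (w - b + (w⁻¹ - b)) ^ 2 - 4 * ρ * ((w - b) * (w⁻¹ - b)) := by
    rw [joukowski]
    field_simp
    ring
  rw [norm_eq_norm_iff_exists_add_sq_eq]
  constructor
  · rintro ⟨ρ, hρ, s, hs, hz⟩
    refine ⟨ρ, hρ, ?_⟩
    rw [← sub_eq_zero, ← quadratic, hz, add_sub_cancel_left, hs, sub_self, mul_zero]
  · rintro ⟨ρ, hρ, h⟩
    refine ⟨ρ, hρ, joukowski w - b * (1 - ρ), ?_, (add_sub_cancel _ _).symm⟩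
    linear_combination (quadratic ρ + h) / 4

lemma joukowski_mem_joukowskiCenteredCircle_iff (hw : w ≠ 0) (hb : b ≠ 0) :
    joukowski w ∈ joukowskiCenteredCircle b ↔ ‖w - b‖ * ‖w⁻¹ - b‖ = ‖b‖ * ‖b‖ := by
  change ‖joukowski w - joukowski b‖ = ‖b‖ / 2 ↔ _
  rw [joukowski_sub_joukowski hw hb, norm_div, norm_neg, norm_mul, norm_mul, Complex.norm_two,
    div_eq_iff (mul_ne_zero two_ne_zero (norm_ne_zero_iff.2 hb))]
  ring_nf

lemma joukowski_mem_joukowskiImageCircle_iff (hw : w ≠ 0) :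
    joukowski w ∈ joukowskiImageCircle b ↔ ‖w - b‖ = ‖b‖ ∨ ‖w⁻¹ - b‖ = ‖b‖ := by
  have norm_eq (s : ℂ) : ‖b - joukowski w - s‖ = ‖joukowski w + s - b‖ := by
    rw [sub_sub, norm_sub_rev]
  constructor
  · rintro ⟨s, hs, h⟩
    rw [norm_eq] at h
    rcases (sq_eq_joukowski_sq_sub_one_iff hw).1 hs with add_eq | add_eq
    · exact .inl (add_eq ▸ h)
    · exact .inr (add_eq ▸ h)
  · rintro (h | h)
    · refine ⟨w - joukowski w, (sq_eq_joukowski_sq_sub_one_iff hw).2 (.inl ?_), ?_⟩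
      · exact add_sub_cancel _ _
      · rwa [norm_eq, add_sub_cancel]
    · refine ⟨w⁻¹ - joukowski w, (sq_eq_joukowski_sq_sub_one_iff hw).2 (.inr ?_), ?_⟩
      · exact add_sub_cancel _ _
      · rwa [norm_eq, add_sub_cancel]

end Membership

section CommonPoint

variable {w b : ℂ}

lemma joukowski_eq_commonPoint (hw : w ≠ 0) (hb : b ≠ 0) (h : ‖w - b‖ = ‖b‖)
    (h_inv : ‖w⁻¹ - b‖ = ‖b‖) : joukowski w = commonPoint b := by
  rw [norm_sub_eq_norm_iff_re_mul_inv hw] at h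
  rw [norm_sub_eq_norm_iff_re_mul_inv (inv_ne_zero hw), inv_inv] at h_inv
  have mul_eq : b * w * (b * w⁻¹) = b ^ 2 := by field_simp
  have add_eq := add_eq_one_add_two_im_mul h_inv h
  rw [mul_eq] at add_eq
  rw [joukowski, commonPoint, eq_div_iff hb]
  linear_combination add_eq / 2

lemma exists_norm_sub_eq_norm_and_norm_inv_sub_eq_norm (hb : 1 / 2 ≤ |b.re|) :
    ∃ w ≠ 0, ‖w - b‖ = ‖b‖ ∧ ‖w⁻¹ - b‖ = ‖b‖ := by
  have hb₀ : b ≠ 0 := by rintro rfl; norm_num at hb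
  obtain ⟨x, y, hx, hy, hxy⟩ := exists_re_eq_half_mul_eq (quarter_le_re_sq_add_im_sq_sq hb)
  have hx₀ : x ≠ 0 := by rintro rfl; norm_num at hx
  have hw : x / b ≠ 0 := div_ne_zero hx₀ hb₀
  have mul_eq_x : b * (x / b) = x := mul_div_cancel₀ x hb₀
  have mul_inv_eq_y : b * (x / b)⁻¹ = y := by
    field_simp
    exact hxy.symm
  refine ⟨x / b, hw, ?_, ?_⟩
  · rwa [norm_sub_eq_norm_iff_re_mul_inv hw, mul_inv_eq_y]
  · rwa [norm_sub_eq_norm_iff_re_mul_inv (inv_ne_zero hw), inv_inv, mul_eq_x]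

lemma eq_singleton_commonPoint (hb : 1 / 2 ≤ |b.re|) {S : Set ℂ}
    (hS : ∀ w ≠ 0, joukowski w ∈ S ↔ ‖w - b‖ = ‖b‖ ∧ ‖w⁻¹ - b‖ = ‖b‖) :
    S = {commonPoint b} := by
  have hb₀ : b ≠ 0 := by rintro rfl; norm_num at hb
  refine eq_singleton_iff_unique_mem.2 ⟨?_, fun z hz ↦ ?_⟩
  · obtain ⟨w, hw, h, h_inv⟩ := exists_norm_sub_eq_norm_and_norm_inv_sub_eq_norm hb
    rw [← joukowski_eq_commonPoint hw hb₀ h h_inv]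
    exact (hS w hw).2 ⟨h, h_inv⟩
  · obtain ⟨w, hw, rfl⟩ := exists_joukowski_eq z
    obtain ⟨h, h_inv⟩ := (hS w hw).1 hz
    exact joukowski_eq_commonPoint hw hb₀ h h_inv

end CommonPoint

theorem stmt_6_general {b : ℂ} (hb : 1 / 2 ≤ |b.re|) :
    equidistantArc b ∩ joukowskiCenteredCircle b = {commonPoint b} ∧
      joukowskiImageCircle b ∩ joukowskiCenteredCircle b = {commonPoint b} ∧
      joukowskiImageCircle b ∩ equidistantArc b = {commonPoint b} := by
  have hb₀ : b ≠ 0 := by rintro rfl; norm_num at hb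
  have norm_pos : 0 < ‖b‖ := norm_pos_iff.2 hb₀
  refine ⟨eq_singleton_commonPoint hb fun w hw ↦ ?_, eq_singleton_commonPoint hb fun w hw ↦ ?_,
    eq_singleton_commonPoint hb fun w hw ↦ ?_⟩
  · rw [mem_inter_iff, joukowski_mem_equidistantArc_iff hw,
      joukowski_mem_joukowskiCenteredCircle_iff hw hb₀]
    refine ⟨fun ⟨equidistant, product⟩ ↦ ?_,
      fun ⟨h, h_inv⟩ ↦ ⟨h.trans h_inv.symm, by rw [h, h_inv]⟩⟩
    rw [← equidistant, mul_self_inj (norm_nonneg _) norm_pos.le] at product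
    exact ⟨product, equidistant ▸ product⟩
  · rw [mem_inter_iff, joukowski_mem_joukowskiImageCircle_iff hw,
      joukowski_mem_joukowskiCenteredCircle_iff hw hb₀]
    refine ⟨?_, fun ⟨h, h_inv⟩ ↦ ⟨.inl h, by rw [h, h_inv]⟩⟩
    rintro ⟨h | h_inv, product⟩
    · exact ⟨h, mul_left_cancel₀ norm_pos.ne' (h ▸ product)⟩
    · exact ⟨mul_right_cancel₀ norm_pos.ne' (h_inv ▸ product), h_inv⟩
  · rw [mem_inter_iff, joukowski_mem_joukowskiImageCircle_iff hw,
      joukowski_mem_equidistantArc_iff hw]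
    grind

/-- Let `b ∈ ℂ` with `Re b ≤ −1/2`. Define
`L_b = {z : ∃ s, s² = z² − 1 ∧ |b − z − s| = |b|}`. Then `L_b ∩ C_b` consists of exactly
one point; this point equals the unique point `i_b` of `𝒜 ∩ C_b`; moreover
`L_b ∩ 𝒜 = L_b ∩ C_b = {i_b}`. -/
theorem stmt_6 (b : ℂ) (hb : b.re ≤ -1/2)
    (A : Set ℂ)
    (hA : A = {z : ℂ | ∃ ρ : ℝ, ρ ∈ Set.Icc (0 : ℝ) 1 ∧ ∃ s : ℂ,
      s ^ 2 = (ρ : ℂ) * (1 - b ^ 2 + b ^ 2 * (ρ : ℂ)) ∧ z = b * (1 - (ρ : ℂ)) + s})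
    (c : ℂ) (hc : c = (b + 1 / b) / 2)
    (Cb : Set ℂ) (hCb : Cb = {z : ℂ | ‖z - c‖ = ‖b‖ / 2})
    (Lb : Set ℂ)
    (hLb : Lb = {z : ℂ | ∃ s : ℂ, s ^ 2 = z ^ 2 - 1 ∧
      ‖b - z - s‖ = ‖b‖}) :
    ∃ ib : ℂ, A ∩ Cb = {ib} ∧ Lb ∩ Cb = {ib} ∧ Lb ∩ A = {ib} := by
  subst hA hc hCb hLb
  rw [one_div]
  exact ⟨commonPoint b, stmt_6_general (le_abs'.2 (.inl (by linarith)))⟩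
end

section
/- Let b be a nonzero complex number and ρ ∈ [0,1]. The quadratic equation x² + 2√ρ·x + (1 − 1/b²) = 0 has a complex solution x of modulus one if and only if 4ρ|b|⁴ = (b² + conj(b)² − 1)². -/
/-!
For `x` on the unit circle and `s` real, dividing `x² + 2sx + 1 = a` by `x` gives
`x + conj x + 2s = a * conj x`, whose left side is real. Hence `a * conj x` is real, which leaves
only the two square roots of `a / conj a` as candidates for `x`. With `a = 1 / b²` these are
`± conj b / b`, and substituting them gives `∓ 2s|b|² = b² + (conj b)² - 1`.
-/

open scoped ComplexConjugate

section UnimodularRoot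

variable {𝕜 : Type*} [RCLike 𝕜]

lemma mul_conj_eq_ofReal_of_root {a x : 𝕜} {s : ℝ} (hx : ‖x‖ = 1)
    (hroot : x ^ 2 + 2 * s * x + (1 - a) = 0) :
    a * conj x = ((2 * (RCLike.re x + s) : ℝ) : 𝕜) := by
  have hunit : x * conj x = 1 := by simp [RCLike.mul_conj, hx]
  have hre : x + conj x = 2 * (RCLike.re x : 𝕜) := RCLike.add_conj x
  push_cast
  linear_combination (x + 2 * s) * hunit - conj x * hroot + hre

lemma sq_eq_div_conj_of_mul_conj_eq_ofReal {a x : 𝕜} {t : ℝ} (ha : a ≠ 0) (hx : ‖x‖ = 1)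
    (hreal : a * conj x = t) : x ^ 2 = a / conj a := by
  have hunit : x * conj x = 1 := by simp [RCLike.mul_conj, hx]
  have hconj : conj a * x = t := by simpa using congrArg conj hreal
  rw [eq_div_iff (by simpa using ha)]
  linear_combination x * hconj - x * hreal + a * hunit

lemma eq_conj_div_or_eq_neg_conj_div_of_root {b x : 𝕜} {s : ℝ} (hb : b ≠ 0) (hx : ‖x‖ = 1)
    (hroot : x ^ 2 + 2 * s * x + (1 - 1 / b ^ 2) = 0) :
    x = conj b / b ∨ x = -conj b / b := by
  have hsq : x ^ 2 = (1 / b ^ 2) / conj (1 / b ^ 2) :=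
    sq_eq_div_conj_of_mul_conj_eq_ofReal (by simpa using hb) hx
      (mul_conj_eq_ofReal_of_root hx hroot)
  rw [neg_div, ← sq_eq_sq_iff_eq_or_eq_neg, hsq]
  simp [div_eq_mul_inv, mul_pow, mul_comm]

lemma quadratic_div_eq_zero_iff {K : Type*} [Field K] {b : K} (hb : b ≠ 0) (c s : K) :
    (c / b) ^ 2 + 2 * s * (c / b) + (1 - 1 / b ^ 2) = 0 ↔
      2 * s * (b * c) = -(b ^ 2 + c ^ 2 - 1) := by
  have hmul : b ^ 2 * ((c / b) ^ 2 + 2 * s * (c / b) + (1 - 1 / b ^ 2)) =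
      2 * s * (b * c) + (b ^ 2 + c ^ 2 - 1) := by
    field_simp
    ring
  rw [← mul_eq_zero_iff_left (pow_ne_zero 2 hb), hmul, eq_neg_iff_add_eq_zero]

lemma exists_norm_eq_one_root_iff {b : 𝕜} (hb : b ≠ 0) (s : ℝ) :
    (∃ x : 𝕜, ‖x‖ = 1 ∧ x ^ 2 + 2 * s * x + (1 - 1 / b ^ 2) = 0) ↔
      2 * s * (b * conj b) = b ^ 2 + conj b ^ 2 - 1 ∨
        2 * s * (b * conj b) = -(b ^ 2 + conj b ^ 2 - 1) := by
  have hpos := quadratic_div_eq_zero_iff hb (conj b) (s : 𝕜)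
  have hneg := quadratic_div_eq_zero_iff hb (-conj b) (s : 𝕜)
  rw [neg_sq, mul_neg, mul_neg, neg_inj] at hneg
  rw [← hpos, ← hneg]
  constructor
  · rintro ⟨x, hx, hroot⟩
    rcases eq_conj_div_or_eq_neg_conj_div_of_root hb hx hroot with rfl | rfl
    · exact .inr hroot
    · exact .inl hroot
  · rintro (hroot | hroot)
    · exact ⟨-conj b / b, by simp [hb], hroot⟩
    · exact ⟨conj b / b, by simp [hb], hroot⟩

theorem stmt_8_general {b : 𝕜} (hb : b ≠ 0) (s : ℝ) :
    (∃ x : 𝕜, ‖x‖ = 1 ∧ x ^ 2 + 2 * s * x + (1 - 1 / b ^ 2) = 0) ↔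
      ((4 * s ^ 2 * ‖b‖ ^ 4 : ℝ) : 𝕜) = (b ^ 2 + conj b ^ 2 - 1) ^ 2 := by
  have hsq : ((4 * s ^ 2 * ‖b‖ ^ 4 : ℝ) : 𝕜) = (2 * s * (b * conj b)) ^ 2 := by
    rw [RCLike.mul_conj]
    push_cast
    ring
  rw [exists_norm_eq_one_root_iff hb, hsq, sq_eq_sq_iff_eq_or_eq_neg]

end UnimodularRoot

/-- Let `b ≠ 0` and `ρ ∈ [0,1]`. The quadratic equation
`x² + 2√ρ·x + (1 − 1/b²) = 0` has a complex solution `x` of modulus one iff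
`4ρ|b|⁴ = (b² + conj(b)² − 1)²`. -/
theorem stmt_8 (b : ℂ) (hb : b ≠ 0) (ρ : ℝ) (hρ : ρ ∈ Set.Icc (0 : ℝ) 1) :
    (∃ x : ℂ, ‖x‖ = 1 ∧
      x ^ 2 + 2 * (Real.sqrt ρ : ℂ) * x + (1 - 1 / b ^ 2) = 0) ↔
    ((4 * ρ * ‖b‖ ^ 4 : ℝ) : ℂ) =
      (b ^ 2 + (starRingEnd ℂ) b ^ 2 - 1) ^ 2 := by
  have hgeneral := stmt_8_general hb √ρ
  rwa [Real.sq_sqrt hρ.1] at hgeneral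
end

section
/- Let R ∈ (1, 3/2] and b = 1 − R (so b ∈ [−1/2, 0)). For each n ≥ 1, the function f_n(z) = (z − b + s)^n + (z − b − s)^n − (−b)^n, where s is either complex square root of z² − 1 (the value is independent of the choice), has exactly n zeros in ℂ; they are pairwise distinct and all lie in the real interval [−1, 1]. -/
/-!
Write `u = z - b + s` and `v = z - b - s`. Then `u + v` and `u * v` are affine in `z`, so
`uⁿ + vⁿ` is a Dickson polynomial in them, hence a polynomial of degree at most `n` in `z`.
For `z ∈ [-1, 1]` the point `u` runs over the upper half of the unit circle centred at `-b`.
In polar coordinates `u = r e^{iθ}` around the origin, `uⁿ + vⁿ = 2 rⁿ cos (n θ)` with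
`r ≥ 1 - |b|`, so this quantity exceeds any level `d` with `|d| < 2 (1 - |b|)ⁿ` in absolute value
at each `θ = k π / n`, with alternating signs. The intermediate value theorem then produces `n`
distinct zeros of `uⁿ + vⁿ - d` in `[-1, 1]`, which is all that the degree allows.
For `|b| ≤ 1 / 2` the level `d = (-b)ⁿ` is admissible.
-/

open Polynomial Set

section ConjugatePowerSum

variable {A : Type*} [CommRing A]

lemma eval_dickson_one_add_of_mul_eq {a x y : A} (h : x * y = a) (n : ℕ) :
    (dickson 1 a n).eval (x + y) = x ^ n + y ^ n := by
  subst h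
  induction n using Nat.twoStepInduction with
  | zero => norm_num
  | one => simp
  | more n ihn ihn' =>
    simp only [dickson_add_two, eval_sub, eval_mul, eval_X, eval_C, ihn, ihn']
    ring

/-- The polynomial in `z` whose value is `(z - b + s) ^ n + (z - b - s) ^ n` for either square
root `s` of `z ^ 2 - 1`; up to scaling and an additive constant, the `n`-th Faber polynomial of
the Joukowski airfoil. It is the Dickson polynomial with the sum `2 * (z - b)` and the product
`b ^ 2 + 1 - 2 * b * z` of the two bases substituted in. -/
noncomputable def conjugatePowerSum (b : A) (n : ℕ) : A[X] :=
  (dickson 1 (C (b ^ 2 + 1) - C (2 * b) * X) n).eval (C 2 * (X - C b))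

lemma eval_conjugatePowerSum (b : A) (n : ℕ) {z s : A} (hs : s ^ 2 = z ^ 2 - 1) :
    (conjugatePowerSum b n).eval z = (z - b + s) ^ n + (z - b - s) ^ n := by
  have hprod : (z - b + s) * (z - b - s) = b ^ 2 + 1 - 2 * b * z := by
    linear_combination -hs
  rw [← eval_dickson_one_add_of_mul_eq hprod, conjugatePowerSum, ← coe_evalRingHom z,
    ← eval_map_apply, map_dickson]
  simp only [coe_evalRingHom, eval_sub, eval_mul, eval_C, eval_X]
  congr 1
  ring

lemma conjugatePowerSum_add_two (b : A) (n : ℕ) :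
    conjugatePowerSum b (n + 2) = C 2 * (X - C b) * conjugatePowerSum b (n + 1) -
      (C (b ^ 2 + 1) - C (2 * b) * X) * conjugatePowerSum b n := by
  simp only [conjugatePowerSum, dickson_add_two, eval_sub, eval_mul, eval_X, eval_C]

lemma natDegree_conjugatePowerSum_le (b : A) (n : ℕ) :
    (conjugatePowerSum b n).natDegree ≤ n := by
  induction n using Nat.twoStepInduction with
  | zero =>
    simp only [conjugatePowerSum, dickson_zero]
    compute_degree
  | one =>
    simp only [conjugatePowerSum, dickson_one, eval_X]
    compute_degree
  | more n ihn ihn' =>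
    have hsum : (C 2 * (X - C b)).natDegree ≤ 1 := by compute_degree
    have hprod : (C (b ^ 2 + 1) - C (2 * b) * X).natDegree ≤ 1 := by compute_degree
    rw [conjugatePowerSum_add_two]
    refine (natDegree_sub_le_of_le (natDegree_mul_le_of_le hsum ihn')
      (natDegree_mul_le_of_le hprod ihn)).trans ?_
    omega

end ConjugatePowerSum

lemma eval_conjugatePowerSum_eq_iff {K : Type*} [Field K] [IsAlgClosed K] (b d z : K) (n : ℕ) :
    (conjugatePowerSum b n).eval z = d ↔
      ∀ s : K, s ^ 2 = z ^ 2 - 1 → (z - b + s) ^ n + (z - b - s) ^ n - d = 0 := by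
  refine ⟨fun h s hs => by rw [← eval_conjugatePowerSum b n hs, h, sub_self], fun h => ?_⟩
  obtain ⟨s, hs⟩ := IsAlgClosed.exists_pow_nat_eq (z ^ 2 - 1) two_pos
  rw [eval_conjugatePowerSum b n hs, sub_eq_zero.1 (h s hs)]

lemma eval_conjugatePowerSum_polar {b r θ : ℝ}
    (h : (r * Real.cos θ + b) ^ 2 + (r * Real.sin θ) ^ 2 = 1) (n : ℕ) :
    (conjugatePowerSum (b : ℂ) n).eval ((r * Real.cos θ + b : ℝ) : ℂ) =
      ((2 * r ^ n * Real.cos (n * θ) : ℝ) : ℂ) := by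
  have hs : (r * Complex.sin θ * Complex.I) ^ 2 = ((r * Real.cos θ + b : ℝ) : ℂ) ^ 2 - 1 := by
    have h' : (r * Complex.cos θ + b) ^ 2 + (r * Complex.sin θ) ^ 2 = 1 := by exact_mod_cast h
    push_cast
    linear_combination (r * Complex.sin θ) ^ 2 * Complex.I_sq - h'
  have hadd : ((r * Real.cos θ + b : ℝ) : ℂ) - b + r * Complex.sin θ * Complex.I =
      r * Complex.exp (θ * Complex.I) := by
    rw [Complex.exp_mul_I]; push_cast; ring
  have hsub : ((r * Real.cos θ + b : ℝ) : ℂ) - b - r * Complex.sin θ * Complex.I =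
      r * Complex.exp (-θ * Complex.I) := by
    rw [Complex.exp_mul_I, Complex.cos_neg, Complex.sin_neg]; push_cast; ring
  rw [eval_conjugatePowerSum _ n hs, hadd, hsub, mul_pow, mul_pow, ← Complex.exp_nat_mul,
    ← Complex.exp_nat_mul, ← mul_add, ← mul_assoc, ← mul_assoc, mul_neg, ← Complex.two_cos]
  push_cast
  ring

section PolarRadius

/-- The distance from the origin to the unit circle centred at `-b` in the direction `θ`; for
`|b| < 1` the origin lies inside the circle, and `polarRadius b` is its polar equation. -/
noncomputable def polarRadius (b θ : ℝ) : ℝ :=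
  √(1 - b ^ 2 * Real.sin θ ^ 2) - b * Real.cos θ

variable {b : ℝ}

lemma continuous_polarRadius (b : ℝ) : Continuous (polarRadius b) := by
  unfold polarRadius
  fun_prop

lemma polarRadius_sq_add_sq_eq_one (hb : |b| ≤ 1) (θ : ℝ) :
    (polarRadius b θ * Real.cos θ + b) ^ 2 + (polarRadius b θ * Real.sin θ) ^ 2 = 1 := by
  have hb' : b ^ 2 ≤ 1 := (sq_le_one_iff_abs_le_one b).2 hb
  have hnonneg : 0 ≤ 1 - b ^ 2 * Real.sin θ ^ 2 :=
    sub_nonneg.2 (mul_le_one₀ hb' (sq_nonneg _) (Real.sin_sq_le_one θ))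
  have hsqrt := Real.sq_sqrt hnonneg
  have htrig := Real.sin_sq_add_cos_sq θ
  rw [polarRadius]
  set q := √(1 - b ^ 2 * Real.sin θ ^ 2)
  linear_combination hsqrt + ((q - b * Real.cos θ) ^ 2 - b ^ 2) * htrig

lemma polarRadius_pos (hb : |b| < 1) (θ : ℝ) : 0 < polarRadius b θ := by
  have hb' : b ^ 2 < 1 := (sq_lt_one_iff_abs_lt_one b).2 hb
  have hlt : (b * Real.cos θ) ^ 2 < 1 - b ^ 2 * Real.sin θ ^ 2 := by
    linear_combination hb' + b ^ 2 * Real.sin_sq_add_cos_sq θ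
  exact sub_pos.2 (Real.lt_sqrt_of_sq_lt hlt)

lemma one_sub_abs_le_polarRadius (hb : |b| < 1) (θ : ℝ) : 1 - |b| ≤ polarRadius b θ := by
  have hr := polarRadius_pos hb θ
  have hcos : b * Real.cos θ ≤ |b| := by
    refine (le_abs_self _).trans ?_
    rw [abs_mul]
    exact mul_le_of_le_one_right (abs_nonneg b) (Real.abs_cos_le_one θ)
  have hsq : 1 ^ 2 ≤ (polarRadius b θ + |b|) ^ 2 := by
    calc 1 ^ 2 = polarRadius b θ ^ 2 + 2 * polarRadius b θ * (b * Real.cos θ) + b ^ 2 := by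
          linear_combination -polarRadius_sq_add_sq_eq_one hb.le θ +
            polarRadius b θ ^ 2 * Real.sin_sq_add_cos_sq θ
      _ ≤ polarRadius b θ ^ 2 + 2 * polarRadius b θ * |b| + |b| ^ 2 := by
          rw [sq_abs]; gcongr
      _ = (polarRadius b θ + |b|) ^ 2 := by ring
  linarith [le_of_sq_le_sq hsq (by positivity)]

lemma polarRadius_mul_cos_add_mem_Icc (hb : |b| ≤ 1) (θ : ℝ) :
    polarRadius b θ * Real.cos θ + b ∈ Icc (-1) 1 := by
  refine abs_le.1 ((sq_le_one_iff_abs_le_one _).1 ?_)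
  linarith [polarRadius_sq_add_sq_eq_one hb θ, sq_nonneg (polarRadius b θ * Real.sin θ)]

-- The abscissa determines the point of the upper half circle, whose argument is the angle.
lemma injOn_polarRadius_mul_cos_add (hb : |b| < 1) :
    InjOn (fun θ => polarRadius b θ * Real.cos θ + b) (Icc 0 Real.pi) := by
  refine LeftInvOn.injOn (f₁' := fun x => Complex.arg (x - b + √(1 - x ^ 2) * Complex.I)) ?_
  intro θ hθ
  have hr := polarRadius_pos hb θ
  have hsin : √(1 - (polarRadius b θ * Real.cos θ + b) ^ 2) = polarRadius b θ * Real.sin θ := by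
    rw [← eq_sub_iff_add_eq'.2 (polarRadius_sq_add_sq_eq_one hb.le θ),
      Real.sqrt_sq (mul_nonneg hr.le (Real.sin_nonneg_of_mem_Icc hθ))]
  have hpolar : ((polarRadius b θ * Real.cos θ + b : ℝ) : ℂ) - b +
      (polarRadius b θ * Real.sin θ : ℝ) * Complex.I =
        polarRadius b θ * (Complex.cos θ + Complex.sin θ * Complex.I) := by
    push_cast; ring
  dsimp only
  rw [hsin, hpolar, Complex.arg_mul_cos_add_sin_mul_I hr
    ⟨(neg_lt_zero.2 Real.pi_pos).trans_le hθ.1, hθ.2⟩]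

end PolarRadius

section SignAlternation

variable {α : Type*} [ConditionallyCompleteLinearOrder α] [DenselyOrdered α] [TopologicalSpace α]
  [OrderTopology α] {g : α → ℝ}

lemma exists_zero_mem_Ioo_of_mul_neg {x y : α} (hxy : x ≤ y) (hg : ContinuousOn g (Icc x y))
    (h : g x * g y < 0) : ∃ t ∈ Ioo x y, g t = 0 := by
  rcases mul_neg_iff.1 h with ⟨hx, hy⟩ | ⟨hx, hy⟩
  · exact intermediate_value_Ioo' hxy hg ⟨hy, hx⟩
  · exact intermediate_value_Ioo hxy hg ⟨hx, hy⟩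

lemma exists_strictMono_zeros_of_alternating {n : ℕ} {p : Fin (n + 1) → α} (hp : StrictMono p)
    (hg : ContinuousOn g (Icc (p 0) (p (Fin.last n))))
    (halt : ∀ k : Fin (n + 1), 0 < (-1) ^ (k : ℕ) * g (p k)) :
    ∃ t : Fin n → α, StrictMono t ∧
      ∀ k, t k ∈ Ioo (p k.castSucc) (p k.succ) ∧ g (t k) = 0 := by
  have hzero : ∀ k : Fin n, ∃ t ∈ Ioo (p k.castSucc) (p k.succ), g t = 0 := by
    intro k
    refine exists_zero_mem_Ioo_of_mul_neg (hp k.castSucc_lt_succ).le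
      (hg.mono (Icc_subset_Icc (hp.monotone (Fin.zero_le _)) (hp.monotone (Fin.le_last _)))) ?_
    have hmul := mul_pos (halt k.castSucc) (halt k.succ)
    have hsign : ((-1) ^ (k : ℕ) * (-1) ^ (k : ℕ) : ℝ) = 1 := by
      rw [← mul_pow, neg_one_mul, neg_neg, one_pow]
    simp only [Fin.val_castSucc, Fin.val_succ, pow_succ] at hmul
    linear_combination hmul - g (p k.castSucc) * g (p k.succ) * hsign
  choose t ht ht0 using hzero
  refine ⟨t, fun i j hij => ?_, fun k => ⟨ht k, ht0 k⟩⟩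
  calc t i < p i.succ := (ht i).2
    _ ≤ p j.castSucc := hp.monotone (Fin.succ_le_castSucc_iff.2 hij)
    _ < t j := (ht j).1

end SignAlternation

lemma neg_one_pow_mul_mul_cos_nat_mul_pi_sub_pos {ρ d : ℝ} (hd : |d| < ρ) (k : ℕ) :
    0 < (-1) ^ k * (ρ * Real.cos (k * Real.pi) - d) := by
  rw [Real.cos_nat_mul_pi]
  rcases neg_one_pow_eq_or ℝ k with hk | hk <;> rw [hk] <;> linarith [abs_lt.1 hd]

lemma abs_lt_two_mul_polarRadius_pow {b d : ℝ} {n : ℕ} (hb : |b| < 1)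
    (hd : |d| < 2 * (1 - |b|) ^ n) (θ : ℝ) : |d| < 2 * polarRadius b θ ^ n :=
  hd.trans_le <| mul_le_mul_of_nonneg_left
    (pow_le_pow_left₀ (sub_nonneg.2 hb.le) (one_sub_abs_le_polarRadius hb θ) n) zero_le_two

lemma exists_injective_angles_of_abs_lt {b d : ℝ} {n : ℕ} (hb : |b| < 1)
    (hd : |d| < 2 * (1 - |b|) ^ n) :
    ∃ t : Fin n → ℝ, t.Injective ∧ ∀ k, t k ∈ Icc 0 Real.pi ∧
      2 * polarRadius b (t k) ^ n * Real.cos (n * t k) = d := by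
  let p : Fin (n + 1) → ℝ := fun k => (k : ℕ) * Real.pi / n
  have hp : StrictMono p := fun i j hij => by
    have hn : 0 < n := by omega
    dsimp only [p]
    gcongr
    exact hij
  have hp_mem : ∀ k, p k ∈ Icc 0 Real.pi := fun k => by
    refine ⟨by positivity, div_le_of_le_mul₀ (by positivity) Real.pi_pos.le ?_⟩
    rw [mul_comm Real.pi]
    gcongr
    exact Fin.is_le k
  have hangle : ∀ k, n * p k = (k : ℕ) * Real.pi := fun k =>
    mul_div_cancel_of_imp' fun hn => by
      obtain rfl : n = 0 := Nat.cast_eq_zero.1 hn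
      simp
  have hcont : Continuous fun θ => 2 * polarRadius b θ ^ n * Real.cos (n * θ) - d := by
    have := continuous_polarRadius b
    fun_prop
  obtain ⟨t, htmono, ht⟩ := exists_strictMono_zeros_of_alternating hp hcont.continuousOn
    fun k => by
      rw [hangle]
      exact neg_one_pow_mul_mul_cos_nat_mul_pi_sub_pos (abs_lt_two_mul_polarRadius_pow hb hd _) k
  exact ⟨t, htmono.injective, fun k =>
    ⟨⟨(hp_mem _).1.trans (ht k).1.1.le, (ht k).1.2.le.trans (hp_mem _).2⟩,
      sub_eq_zero.1 (ht k).2⟩⟩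

lemma exists_finset_zeros_conjugatePowerSum {b d : ℝ} {n : ℕ} (hb : |b| < 1)
    (hd : |d| < 2 * (1 - |b|) ^ n) :
    ∃ Z : Finset ℂ, Z.card = n ∧ ∀ z ∈ Z,
      (conjugatePowerSum (b : ℂ) n).eval z = d ∧ ∃ x : ℝ, x ∈ Icc (-1 : ℝ) 1 ∧ z = x := by
  obtain ⟨t, htinj, ht⟩ := exists_injective_angles_of_abs_lt hb hd
  let x : Fin n → ℝ := fun k => polarRadius b (t k) * Real.cos (t k) + b
  have hx : Function.Injective fun k => (x k : ℂ) := fun i j hij =>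
    htinj (injOn_polarRadius_mul_cos_add hb (ht i).1 (ht j).1 (Complex.ofReal_injective hij))
  refine ⟨Finset.univ.image fun k => (x k : ℂ), ?_, ?_⟩
  · rw [Finset.card_image_of_injective _ hx, Finset.card_fin]
  · simp only [Finset.forall_mem_image]
    refine fun k _ => ⟨?_, x k, polarRadius_mul_cos_add_mem_Icc hb.le _, rfl⟩
    rw [eval_conjugatePowerSum_polar (polarRadius_sq_add_sq_eq_one hb.le _), (ht k).2]

lemma conjugatePowerSum_ne_C {b d : ℝ} {n : ℕ} (hb : |b| < 1)
    (hd : |d| < 2 * (1 - |b|) ^ n) : conjugatePowerSum (b : ℂ) n ≠ C (d : ℂ) := by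
  intro heq
  have heval : (d : ℂ) = (1 - b) ^ n + (1 - b) ^ n := by
    simpa [heq] using eval_conjugatePowerSum (b : ℂ) n (z := 1) (s := 0) (by norm_num)
  have hd' : d = 2 * (1 - b) ^ n := by
    rw [two_mul]
    exact_mod_cast heval
  have hle : (1 - |b|) ^ n ≤ (1 - b) ^ n :=
    pow_le_pow_left₀ (sub_nonneg.2 hb.le) (by linarith [le_abs_self b]) n
  linarith [le_abs_self d]

lemma abs_pow_lt_two_mul_one_sub_abs_pow {b : ℝ} (hb : |b| ≤ 1 / 2) (n : ℕ) :
    |b| ^ n < 2 * (1 - |b|) ^ n := by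
  have hle : |b| ^ n ≤ (1 - |b|) ^ n := by gcongr; linarith
  have hpos : 0 < (1 - |b|) ^ n := pow_pos (by linarith) n
  linarith

theorem stmt_9_general {b d : ℝ} {n : ℕ} (hb : |b| < 1) (hd : |d| < 2 * (1 - |b|) ^ n) :
    ∃ Z : Finset ℂ, Z.card = n ∧
      (∀ z : ℂ, z ∈ Z ↔ ∀ s : ℂ, s ^ 2 = z ^ 2 - 1 →
        (z - (b : ℂ) + s) ^ n + (z - (b : ℂ) - s) ^ n - (d : ℂ) = 0) ∧
      (∀ z ∈ Z, ∃ x : ℝ, x ∈ Icc (-1 : ℝ) 1 ∧ z = (x : ℂ)) := by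
  obtain ⟨Z, hcard, hZ⟩ := exists_finset_zeros_conjugatePowerSum hb hd
  let Q : ℂ[X] := conjugatePowerSum (b : ℂ) n - C (d : ℂ)
  have hQ : Q ≠ 0 := sub_ne_zero.2 (conjugatePowerSum_ne_C hb hd)
  have hdeg : Q.natDegree ≤ Z.card := by
    rw [hcard, natDegree_sub_C]
    exact natDegree_conjugatePowerSum_le _ n
  have hroots : Q.roots = Z.val :=
    roots_eq_of_natDegree_le_card_of_ne_zero (fun z hz => by simp [Q, (hZ z hz).1]) hdeg hQ
  refine ⟨Z, hcard, fun z => ?_, fun z hz => (hZ z hz).2⟩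
  rw [← eval_conjugatePowerSum_eq_iff, ← Finset.mem_val, ← hroots, mem_roots hQ, IsRoot.def,
    eval_sub, eval_C, sub_eq_zero]

/-- Let `R ∈ (1, 3/2]` and `b = 1 − R`. For each `n ≥ 1`, the function
`f_n(z) = (z − b + s)ⁿ + (z − b − s)ⁿ − (−b)ⁿ` (with `s` either square root of `z² − 1`;
the value is independent of the choice) has exactly `n` zeros in `ℂ`; they are pairwise
distinct and all lie in the real interval `[−1, 1]`. -/
theorem stmt_9 (R : ℝ) (hR : 1 < R) (hR' : R ≤ 3/2) (b : ℝ) (hb : b = 1 - R)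
    (n : ℕ) (hn : 1 ≤ n) :
    ∃ Z : Finset ℂ, Z.card = n ∧
      (∀ z : ℂ, z ∈ Z ↔ ∀ s : ℂ, s ^ 2 = z ^ 2 - 1 →
        (z - (b : ℂ) + s) ^ n + (z - (b : ℂ) - s) ^ n - (-(b : ℂ)) ^ n = 0) ∧
      (∀ z ∈ Z, ∃ x : ℝ, x ∈ Set.Icc (-1 : ℝ) 1 ∧ z = (x : ℂ)) := by
  have hb' : |b| ≤ 1 / 2 := abs_le.2 ⟨by linarith, by linarith⟩
  have hd : |(-b) ^ n| < 2 * (1 - |b|) ^ n := by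
    simpa only [abs_pow, abs_neg] using abs_pow_lt_two_mul_one_sub_abs_pow hb' n
  simpa only [Complex.ofReal_pow, Complex.ofReal_neg] using
    stmt_9_general (hb'.trans_lt one_half_lt_one) hd
end

section
/- Let R ∈ (1, 3/2] and b = 1 − R. For n ≥ 1 let Z_n ⊂ [−1,1] be the set of the n distinct zeros of f_n. Then for every continuous function f : ℂ → ℝ, (1/n) Σ_{z ∈ Z_n} f(z) converges, as n → ∞, to (1/π) ∫_{−1}^{1} f(x)·(1 − bx)/(√(1 − x²)·(1 + b² − 2bx)) dx. In other words, the normalized zero counting measures μ_n of the Faber polynomials of the corresponding real Joukowski airfoil converge weak-* to the measure (U^{−1})_*(μ_{[−1,1]}) with density (1/π)(1/√(1−x²))·(1−bx)/(1+b²−2bx) on (−1,1). -/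
open Filter

/-!
For `t ∈ [0, π]` shoot a ray from `b` in direction `e^{it}`; it meets the unit circle at
`e^{iθ} = b + ρ e^{it}`. At `z = cos θ` the square roots of `z² - 1` are `± i sin θ`, so that
`z - b ± s = ρ e^{±it}` and `f_n(z) = 2 ρⁿ cos (n t) - (-b)ⁿ`. When `|b| ≤ 1/2` the circle is at
distance at least `1 - |b| ≥ |b|` from `b`, so `2 ρⁿ` dominates `|b|ⁿ` and `f_n` changes sign on
each of the `n` intervals `(kπ/n, (k+1)π/n)`. The zeros are therefore the images under
`t ↦ cos θ(t)` of one point in each of these intervals, and sums over them are Riemann sums.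
The substitution `x = cos θ(t)` turns the limit into the stated integral; since
`ρ² = 1 + b² - 2bx`, we have `U(x) = (x - b) / ρ = cos t`, so `cos t ↦ x` is the inverse of `U`.
-/

open MeasureTheory Real Set Topology

/-! ### Riemann sums -/

section RiemannSum

variable {E : Type*} [NormedAddCommGroup E] [NormedSpace ℝ E] [CompleteSpace E] {F : ℝ → E}

theorem norm_smul_sub_integral_le {v : E} {c d ε : ℝ} (hcd : c ≤ d)
    (hF : IntervalIntegrable F volume c d) (hε : ∀ x ∈ Icc c d, ‖v - F x‖ ≤ ε) :
    ‖(d - c) • v - ∫ x in c..d, F x‖ ≤ ε * (d - c) := by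
  rw [← intervalIntegral.integral_const,
    ← intervalIntegral.integral_sub intervalIntegrable_const hF,
    ← abs_of_nonneg (sub_nonneg.2 hcd)]
  refine intervalIntegral.norm_integral_le_of_norm_le_const fun x hx => hε x ?_
  exact Ioc_subset_Icc_self (uIoc_of_le hcd ▸ hx)

theorem norm_sum_smul_sub_integral_le {u : ℕ → ℝ} {v : ℕ → E} {n : ℕ} {ε : ℝ} (hu : Monotone u)
    (hF : ∀ k < n, IntervalIntegrable F volume (u k) (u (k + 1)))
    (hε : ∀ k < n, ∀ x ∈ Icc (u k) (u (k + 1)), ‖v k - F x‖ ≤ ε) :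
    ‖∑ k ∈ Finset.range n, (u (k + 1) - u k) • v k - ∫ x in u 0..u n, F x‖
      ≤ ε * (u n - u 0) := by
  rw [← intervalIntegral.sum_integral_adjacent_intervals hF, ← Finset.sum_sub_distrib,
    ← Finset.sum_range_sub, Finset.mul_sum]
  refine norm_sum_le_of_le _ fun k hk => ?_
  rw [Finset.mem_range] at hk
  exact norm_smul_sub_integral_le (hu k.le_succ) (hF k hk) (hε k hk)

theorem dist_riemannSum_integral_le {a b ε : ℝ} (hab : a ≤ b) (hF : ContinuousOn F (Icc a b))
    {n : ℕ} (hn : n ≠ 0) {p : ℕ → ℝ}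
    (hp : ∀ k < n, p k ∈ Icc (a + k * ((b - a) / n)) (a + (k + 1) * ((b - a) / n)))
    (hε : ∀ x ∈ Icc a b, ∀ y ∈ Icc a b, dist x y ≤ (b - a) / n → dist (F x) (F y) ≤ ε) :
    dist (((b - a) / n) • ∑ k ∈ Finset.range n, F (p k)) (∫ x in a..b, F x) ≤ ε * (b - a) := by
  have hn' : (n : ℝ) ≠ 0 := Nat.cast_ne_zero.2 hn
  have h_mesh : 0 ≤ (b - a) / n := div_nonneg (sub_nonneg.2 hab) n.cast_nonneg
  let u : ℕ → ℝ := fun k => a + k * ((b - a) / n)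
  have hu : Monotone u := fun i j hij =>
    add_le_add_right (mul_le_mul_of_nonneg_right (Nat.cast_le.2 hij) h_mesh) a
  have hu_zero : u 0 = a := by simp [u]
  have hu_last : u n = b := by simp only [u]; field_simp; ring
  have hu_succ (k : ℕ) : u (k + 1) = a + (k + 1) * ((b - a) / n) := by simp [u]
  have hu_step (k : ℕ) : u (k + 1) - u k = (b - a) / n := by rw [hu_succ]; ring
  have h_cell : ∀ k < n, Icc (u k) (u (k + 1)) ⊆ Icc a b := fun k hk =>
    Icc_subset_Icc (hu_zero ▸ hu k.zero_le) (hu_last ▸ hu hk)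
  have h_osc : ∀ k < n, ∀ x ∈ Icc (u k) (u (k + 1)), ‖F (p k) - F x‖ ≤ ε := fun k hk x hx => by
    have hpk : p k ∈ Icc (u k) (u (k + 1)) := hu_succ k ▸ hp k hk
    rw [← dist_eq_norm]
    exact hε _ (h_cell k hk hpk) _ (h_cell k hk hx)
      ((Real.dist_le_of_mem_Icc hpk hx).trans_eq (hu_step k))
  have h_bound := norm_sum_smul_sub_integral_le hu
    (fun k hk => (hF.mono (h_cell k hk)).intervalIntegrable_of_Icc (hu k.le_succ)) h_osc
  simpa only [hu_step, ← Finset.smul_sum, hu_zero, hu_last, ← dist_eq_norm] using h_bound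

theorem tendsto_riemannSum_of_mem_Icc {a b : ℝ} (hab : a ≤ b) (hF : ContinuousOn F (Icc a b))
    {p : ℕ → ℕ → ℝ}
    (hp : ∀ n : ℕ, 1 ≤ n → ∀ k < n,
      p n k ∈ Icc (a + k * ((b - a) / n)) (a + (k + 1) * ((b - a) / n))) :
    Tendsto (fun n : ℕ => ((b - a) / n) • ∑ k ∈ Finset.range n, F (p n k)) atTop
      (𝓝 (∫ x in a..b, F x)) := by
  have hF_unif := Metric.uniformContinuousOn_iff.1
    (isCompact_Icc.uniformContinuousOn_of_continuous hF)
  rw [Metric.tendsto_nhds]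
  intro ε hε
  have h_length : 0 < b - a + 1 := by linarith
  obtain ⟨δ, hδ, hFδ⟩ := hF_unif (ε / (b - a + 1)) (div_pos hε h_length)
  have h_mesh : ∀ᶠ n : ℕ in atTop, (b - a) / n < δ :=
    (tendsto_const_div_atTop_nhds_zero_nat (b - a)).eventually_lt_const hδ
  filter_upwards [h_mesh, eventually_ge_atTop 1] with n hnδ hn
  calc dist (((b - a) / n) • ∑ k ∈ Finset.range n, F (p n k)) (∫ x in a..b, F x)
      ≤ ε / (b - a + 1) * (b - a) :=
        dist_riemannSum_integral_le hab hF (Nat.one_le_iff_ne_zero.1 hn) (hp n hn)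
          fun x hx y hy hxy => (hFδ x hx y hy (hxy.trans_lt hnδ)).le
    _ < ε := by
      rw [div_mul_eq_mul_div, div_lt_iff₀ h_length]
      linarith

end RiemannSum

/-! ### Rays from an interior point to the unit circle -/

/-- The distance from `b` to the unit circle along the ray of direction `exp (t * I)`,
for `|b| ≤ 1`. -/
noncomputable def rayLength (b t : ℝ) : ℝ := √(1 - (b * sin t) ^ 2) - b * cos t

/-- The argument of the point where the ray from `b` of direction `exp (t * I)` meets the unit
circle, for `|b| ≤ 1`. This choice of the argument is continuous in `t`. -/
noncomputable def rayAngle (b t : ℝ) : ℝ := t - arcsin (b * sin t)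

theorem rayAngle_zero (b : ℝ) : rayAngle b 0 = 0 := by simp [rayAngle]

theorem rayAngle_pi (b : ℝ) : rayAngle b π = π := by simp [rayAngle]

theorem continuous_rayLength (b : ℝ) : Continuous (rayLength b) := by
  unfold rayLength
  fun_prop

theorem continuous_rayAngle (b : ℝ) : Continuous (rayAngle b) :=
  continuous_id.sub (continuous_arcsin.comp (continuous_const.mul continuous_sin))

theorem abs_mul_sin_le (b t : ℝ) : |b * sin t| ≤ |b| := by
  rw [abs_mul]
  exact mul_le_of_le_one_right (abs_nonneg b) (abs_sin_le_one t)

section Ray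

variable {b : ℝ} (t : ℝ)

theorem one_sub_mul_sin_sq_pos (hb : |b| < 1) : 0 < 1 - (b * sin t) ^ 2 :=
  sub_pos.2 ((sq_lt_one_iff_abs_lt_one _).2 ((abs_mul_sin_le b t).trans_lt hb))

theorem one_sub_abs_le_rayLength (hb : |b| ≤ 1) : 1 - |b| ≤ rayLength b t := by
  have h_cos : b * cos t ≤ |b| := by
    refine (le_abs_self _).trans ?_
    rw [abs_mul]
    exact mul_le_of_le_one_right (abs_nonneg b) (abs_cos_le_one t)
  refine le_sub_iff_add_le.2 (le_sqrt_of_sq_le ?_)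
  calc (1 - |b| + b * cos t) ^ 2
      = 1 - (b * sin t) ^ 2 - 2 * ((1 - |b|) * (|b| - b * cos t)) := by
        linear_combination b ^ 2 * sin_sq_add_cos_sq t - sq_abs b
    _ ≤ 1 - (b * sin t) ^ 2 := by
        linarith [mul_nonneg (sub_nonneg.2 hb) (sub_nonneg.2 h_cos)]

theorem rayLength_pos (hb : |b| < 1) : 0 < rayLength b t :=
  (sub_pos.2 hb).trans_le (one_sub_abs_le_rayLength t hb.le)

theorem cos_rayAngle (hb : |b| ≤ 1) : cos (rayAngle b t) = b + rayLength b t * cos t := by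
  obtain ⟨h_lower, h_upper⟩ := abs_le.1 ((abs_mul_sin_le b t).trans hb)
  rw [rayAngle, cos_sub, cos_arcsin, sin_arcsin h_lower h_upper, rayLength]
  linear_combination b * sin_sq_add_cos_sq t

theorem sin_rayAngle (hb : |b| ≤ 1) : sin (rayAngle b t) = rayLength b t * sin t := by
  obtain ⟨h_lower, h_upper⟩ := abs_le.1 ((abs_mul_sin_le b t).trans hb)
  rw [rayAngle, sin_sub, cos_arcsin, sin_arcsin h_lower h_upper, rayLength]
  ring

theorem exp_rayAngle_mul_I_sub (hb : |b| ≤ 1) :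
    Complex.exp (rayAngle b t * Complex.I) - b = rayLength b t * Complex.exp (t * Complex.I) := by
  rw [Complex.exp_mul_I, Complex.exp_mul_I, ← Complex.ofReal_cos, ← Complex.ofReal_sin,
    cos_rayAngle t hb, sin_rayAngle t hb]
  push_cast
  ring

theorem rayLength_sq (hb : |b| ≤ 1) :
    rayLength b t ^ 2 = 1 + b ^ 2 - 2 * b * cos (rayAngle b t) := by
  linear_combination (-rayLength b t ^ 2) * sin_sq_add_cos_sq t
    + sin_sq_add_cos_sq (rayAngle b t)
    - (cos (rayAngle b t) - b + rayLength b t * cos t) * cos_rayAngle t hb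
    - (sin (rayAngle b t) + rayLength b t * sin t) * sin_rayAngle t hb

theorem rayLength_mul_sqrt (hb : |b| < 1) :
    rayLength b t * √(1 - (b * sin t) ^ 2) = 1 - b * cos (rayAngle b t) := by
  rw [cos_rayAngle t hb.le, rayLength]
  linear_combination sq_sqrt (one_sub_mul_sin_sq_pos t hb).le - b ^ 2 * sin_sq_add_cos_sq t

theorem hasDerivAt_rayAngle (hb : |b| < 1) :
    HasDerivAt (rayAngle b) (rayLength b t / √(1 - (b * sin t) ^ 2)) t := by
  obtain ⟨h_lower, h_upper⟩ := abs_lt.1 ((abs_mul_sin_le b t).trans_lt hb)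
  have h_sqrt : √(1 - (b * sin t) ^ 2) ≠ 0 := (sqrt_pos.2 (one_sub_mul_sin_sq_pos t hb)).ne'
  refine ((hasDerivAt_id t).sub ((hasDerivAt_arcsin h_lower.ne' h_upper.ne).comp t
    ((hasDerivAt_sin t).const_mul b))).congr_deriv ?_
  rw [rayLength, sub_div, div_self h_sqrt]
  ring

theorem strictMono_rayAngle (hb : |b| < 1) : StrictMono (rayAngle b) :=
  strictMono_of_hasDerivAt_pos (hasDerivAt_rayAngle · hb) fun t =>
    div_pos (rayLength_pos t hb) (sqrt_pos.2 (one_sub_mul_sin_sq_pos t hb))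

theorem injOn_cos_rayAngle (hb : |b| < 1) : InjOn (fun t => cos (rayAngle b t)) (Icc 0 π) := by
  have h_maps : MapsTo (rayAngle b) (Icc 0 π) (Icc 0 π) := by
    simpa only [rayAngle_zero, rayAngle_pi] using
      (strictMono_rayAngle hb).monotone.mapsTo_Icc (a := 0) (b := π)
  exact injOn_cos.comp (strictMono_rayAngle hb).injective.injOn h_maps

theorem sin_rayAngle_pos (hb : |b| < 1) {t : ℝ} (ht : t ∈ Ioo 0 π) : 0 < sin (rayAngle b t) :=
  sin_rayAngle t hb.le ▸ mul_pos (rayLength_pos t hb) (sin_pos_of_mem_Ioo ht)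

end Ray

/-! ### The limit density -/

/-- The density of the limit of the zero counting measures, without its factor `1 / π`. -/
noncomputable def zeroDensity (b x : ℝ) : ℝ :=
  (1 - b * x) / (√(1 - x ^ 2) * (1 + b ^ 2 - 2 * b * x))

theorem sin_mul_deriv_mul_zeroDensity_cos_rayAngle {b t : ℝ} (hb : |b| < 1) (ht : t ∈ Ioo 0 π) :
    sin (rayAngle b t) * (rayLength b t / √(1 - (b * sin t) ^ 2))
      * zeroDensity b (cos (rayAngle b t)) = 1 := by
  have h_sin := sin_rayAngle_pos hb ht
  have h_length := rayLength_pos t hb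
  have h_sqrt := sqrt_pos.2 (one_sub_mul_sin_sq_pos t hb)
  rw [zeroDensity, ← rayLength_mul_sqrt t hb, ← rayLength_sq t hb.le, ← sin_sq,
    sqrt_sq h_sin.le]
  generalize √(1 - (b * sin t) ^ 2) = q at h_sqrt
  field_simp

theorem integral_zeroDensity_smul {E : Type*} [NormedAddCommGroup E] [NormedSpace ℝ E] {b : ℝ}
    (hb : |b| < 1) (g : ℝ → E) :
    ∫ x in (-1 : ℝ)..1, zeroDensity b x • g x = ∫ t in 0..π, g (cos (rayAngle b t)) := by
  have h_deriv (t : ℝ) := (hasDerivAt_rayAngle t hb).cos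
  have h_subst := integral_Icc_deriv_smul_of_deriv_nonpos (a := 0) (b := π)
    (g := fun x => zeroDensity b x • g x)
    (continuous_cos.comp (continuous_rayAngle b)).continuousOn (fun t _ => h_deriv t)
    (fun t ht => mul_nonpos_of_nonpos_of_nonneg (neg_nonpos.2 (sin_rayAngle_pos hb ht).le)
      (div_nonneg (rayLength_pos t hb).le (sqrt_nonneg _))) pi_pos.le
  rw [Function.comp_apply, Function.comp_apply, rayAngle_zero, rayAngle_pi, cos_zero, cos_pi,
    eq_neg_iff_add_eq_zero, add_comm, ← eq_neg_iff_add_eq_zero, ← integral_neg] at h_subst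
  rw [intervalIntegral.integral_of_le (by norm_num), intervalIntegral.integral_of_le pi_pos.le,
    ← integral_Icc_eq_integral_Ioc, h_subst, integral_Icc_eq_integral_Ioo,
    integral_Ioc_eq_integral_Ioo]
  refine setIntegral_congr_fun measurableSet_Ioo fun t ht => ?_
  simp only [Function.comp_apply, neg_mul, neg_smul, neg_neg, smul_smul,
    sin_mul_deriv_mul_zeroDensity_cos_rayAngle hb ht, one_smul]

/-! ### The zeros -/

/-- `z` is a zero of the `n`-th Faber polynomial of the airfoil with parameter `b`, in the form
`f_n(z) = (z - b + s)^n + (z - b - s)^n - (-b)^n` with `s ^ 2 = z ^ 2 - 1`. -/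
def IsFaberZero (b : ℝ) (n : ℕ) (z : ℂ) : Prop :=
  ∀ s : ℂ, s ^ 2 = z ^ 2 - 1 → (z - b + s) ^ n + (z - b - s) ^ n - (-(b : ℂ)) ^ n = 0

theorem isFaberZero_iff_of_sq_eq {b : ℝ} {n : ℕ} {z s : ℂ} (hs : s ^ 2 = z ^ 2 - 1) :
    IsFaberZero b n z ↔ (z - b + s) ^ n + (z - b - s) ^ n = (-(b : ℂ)) ^ n := by
  refine ⟨fun h => sub_eq_zero.1 (h s hs), fun h r hr => sub_eq_zero.2 ?_⟩
  obtain rfl | rfl := sq_eq_sq_iff_eq_or_eq_neg.1 (hr.trans hs.symm)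
  · exact h
  · rw [sub_neg_eq_add, ← sub_eq_add_neg, add_comm, h]

theorem isFaberZero_cos_rayAngle_iff {b : ℝ} (hb : |b| ≤ 1) (n : ℕ) (t : ℝ) :
    IsFaberZero b n (cos (rayAngle b t) : ℝ) ↔
      2 * rayLength b t ^ n * cos (n * t) = (-b) ^ n := by
  set θ : ℂ := ((rayAngle b t : ℝ) : ℂ)
  have h_root : (Complex.sin θ * Complex.I) ^ 2 = Complex.cos θ ^ 2 - 1 := by
    rw [mul_pow, Complex.I_sq, Complex.sin_sq]
    ring
  have h_add : Complex.cos θ - b + Complex.sin θ * Complex.I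
      = rayLength b t * Complex.exp (t * Complex.I) := by
    rw [← exp_rayAngle_mul_I_sub t hb, Complex.exp_mul_I]
    ring
  have h_sub : Complex.cos θ - b - Complex.sin θ * Complex.I
      = rayLength b t * Complex.exp (-t * Complex.I) := by
    have h_conj := congrArg (starRingEnd ℂ) h_add
    simpa [θ, ← Complex.exp_conj, ← Complex.cos_conj, ← Complex.sin_conj, sub_eq_add_neg]
      using h_conj
  have h_pow : (rayLength b t * Complex.exp (t * Complex.I)) ^ n
      + (rayLength b t * Complex.exp (-t * Complex.I)) ^ n
      = ((2 * rayLength b t ^ n * cos (n * t) : ℝ) : ℂ) := by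
    push_cast
    rw [mul_pow, mul_pow, ← Complex.exp_nat_mul, ← Complex.exp_nat_mul, mul_right_comm,
      Complex.two_cos]
    ring_nf
  rw [Complex.ofReal_cos, isFaberZero_iff_of_sq_eq h_root, h_add, h_sub, h_pow]
  norm_cast

theorem exists_mul_cos_nat_mul_eq {r : ℝ → ℝ} (hr : Continuous r) {a : ℝ} (ha : ∀ t, |a| < r t)
    {n : ℕ} (hn : n ≠ 0) (k : ℕ) :
    ∃ t ∈ Ioo (k * (π / n)) ((k + 1) * (π / n)), r t * cos (n * t) = a := by
  have hn' : (n : ℝ) ≠ 0 := Nat.cast_ne_zero.2 hn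
  have h_sign : |(-1) ^ k * a| = |a| := by rw [abs_mul, abs_neg_one_pow, one_mul]
  have h_le : k * (π / n) ≤ (k + 1) * (π / n) := by gcongr; linarith
  have h_left : cos (n * (k * (π / n))) = (-1) ^ k := by
    rw [← cos_nat_mul_pi]
    congr 1
    field_simp
  have h_right : cos (n * ((k + 1) * (π / n))) = -(-1) ^ k := by
    rw [← cos_nat_mul_pi, ← cos_add_pi]
    congr 1
    field_simp
  have h_sq : ((-1 : ℝ) ^ k) * (-1) ^ k = 1 := by rw [← mul_pow]; norm_num
  -- The factor `(-1) ^ k` makes both parities of `k` cross the level downwards.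
  obtain ⟨t, ht, h_eq⟩ := intermediate_value_Ioo' h_le
    (f := fun t => (-1) ^ k * (r t * cos (n * t))) (by fun_prop)
    (show (-1) ^ k * a ∈ Ioo _ _ by
      simp only [h_left, h_right]
      have h_lower := (abs_lt.1 (h_sign.trans_lt (ha ((k + 1) * (π / n))))).1
      have h_upper := (abs_lt.1 (h_sign.trans_lt (ha (k * (π / n))))).2
      constructor
      · linear_combination h_lower - r ((k + 1) * (π / n)) * h_sq
      · linear_combination h_upper - r (k * (π / n)) * h_sq)
  exact ⟨t, ht, mul_left_cancel₀ (pow_ne_zero k (by norm_num)) h_eq⟩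

theorem exists_isFaberZero_cos_rayAngle {b : ℝ} (hb : |b| ≤ 1 / 2) {n : ℕ} (hn : n ≠ 0) (k : ℕ) :
    ∃ t ∈ Ioo (k * (π / n)) ((k + 1) * (π / n)), IsFaberZero b n (cos (rayAngle b t) : ℝ) := by
  simp only [isFaberZero_cos_rayAngle_iff (hb.trans (by norm_num) : |b| ≤ 1)]
  refine exists_mul_cos_nat_mul_eq (((continuous_rayLength b).pow n).const_mul 2) (fun t => ?_) hn k
  have h_le : |b| ≤ rayLength b t := by linarith [one_sub_abs_le_rayLength t (by linarith)]
  have h_pos : 0 < rayLength b t ^ n := pow_pos (rayLength_pos t (hb.trans_lt (by norm_num))) n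
  calc |(-b) ^ n| = |b| ^ n := by rw [abs_pow, abs_neg]
    _ ≤ rayLength b t ^ n := by gcongr
    _ < 2 * rayLength b t ^ n := by linarith

theorem exists_sum_eq_sum_cos_rayAngle {b : ℝ} (hb : |b| ≤ 1 / 2) {n : ℕ} (hn : n ≠ 0)
    {Z : Finset ℂ} (hZ_card : Z.card = n) (hZ : ∀ z, IsFaberZero b n z → z ∈ Z)
    {E : Type*} [AddCommMonoid E] (f : ℂ → E) :
    ∃ p : ℕ → ℝ, (∀ k < n, p k ∈ Icc (k * (π / n)) ((k + 1) * (π / n))) ∧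
      ∑ z ∈ Z, f z = ∑ k ∈ Finset.range n, f (cos (rayAngle b (p k)) : ℝ) := by
  choose p hp_mem hp_zero using exists_isFaberZero_cos_rayAngle hb hn
  have hp_mono : StrictMono p := strictMono_nat_of_lt_succ fun k =>
    (hp_mem k).2.trans (by exact_mod_cast (hp_mem (k + 1)).1)
  have hp_Icc : MapsTo p (Finset.range n) (Icc 0 π) := fun k hk => by
    have hkn : (k + 1 : ℝ) ≤ n := by exact_mod_cast Finset.mem_range.1 hk
    have h_last : n * (π / n) = π := mul_div_cancel₀ π (Nat.cast_ne_zero.2 hn)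
    have h_upper : (k + 1) * (π / n) ≤ n * (π / n) := by gcongr
    exact ⟨le_trans (by positivity) (hp_mem k).1.le,
      (hp_mem k).2.le.trans (h_upper.trans_eq h_last)⟩
  have h_inj : InjOn (fun k => ((cos (rayAngle b (p k)) : ℝ) : ℂ)) (Finset.range n) :=
    Complex.ofReal_injective.comp_injOn
      ((injOn_cos_rayAngle (hb.trans_lt (by norm_num))).comp hp_mono.injective.injOn hp_Icc)
  have h_image : (Finset.range n).image (fun k => ((cos (rayAngle b (p k)) : ℝ) : ℂ)) = Z :=
    Finset.eq_of_subset_of_card_le (Finset.image_subset_iff.2 fun k _ => hZ _ (hp_zero k))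
      (by rw [hZ_card, Finset.card_image_of_injOn h_inj, Finset.card_range])
  exact ⟨p, fun k _ => Ioo_subset_Icc_self (hp_mem k), by
    rw [← h_image, Finset.sum_image h_inj]⟩

theorem stmt_10_general {E : Type*} [NormedAddCommGroup E] [NormedSpace ℝ E] [CompleteSpace E]
    {b : ℝ} (hb : |b| ≤ 1 / 2) {Z : ℕ → Finset ℂ} (hZ_card : ∀ n, 1 ≤ n → (Z n).card = n)
    (hZ : ∀ n, 1 ≤ n → ∀ z, z ∈ Z n ↔ IsFaberZero b n z) {f : ℂ → E} (hf : Continuous f) :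
    Tendsto (fun n : ℕ => (1 / (n : ℝ)) • ∑ z ∈ Z n, f z) atTop
      (𝓝 ((1 / π) • ∫ x in (-1 : ℝ)..1, zeroDensity b x • f x)) := by
  have h_param := fun (n : ℕ) (hn : 1 ≤ n) => exists_sum_eq_sum_cos_rayAngle hb
    (Nat.one_le_iff_ne_zero.1 hn) (hZ_card n hn) (fun z => (hZ n hn z).2) f
  choose! p hp hp_sum using h_param
  have h_cont : Continuous fun t => f (cos (rayAngle b t) : ℝ) :=
    hf.comp (Complex.continuous_ofReal.comp (continuous_cos.comp (continuous_rayAngle b)))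
  have h_lim := (tendsto_riemannSum_of_mem_Icc pi_pos.le h_cont.continuousOn (p := p)
    (by simpa only [sub_zero, zero_add] using hp)).const_smul (1 / π)
  rw [integral_zeroDensity_smul (hb.trans_lt (by norm_num)) fun x => f x]
  refine h_lim.congr' ?_
  filter_upwards [eventually_ge_atTop 1] with n hn
  rw [hp_sum n hn, smul_smul, sub_zero]
  congr 1
  field_simp

/-- Let `R ∈ (1, 3/2]` and `b = 1 − R`. For `n ≥ 1` let `Z n ⊂ [−1,1]` be
the set of the `n` distinct zeros of `f_n`. Then for every continuous `f : ℂ → ℝ`,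
`(1/n) Σ_{z ∈ Z n} f(z)` converges as `n → ∞` to
`(1/π) ∫_{−1}^{1} f(x)·(1 − bx)/(√(1 − x²)·(1 + b² − 2bx)) dx`; i.e. the normalized zero
counting measures of the Faber polynomials converge weak-* to `(U⁻¹)_*(μ_{[−1,1]})`. -/
theorem stmt_10 (R : ℝ) (hR : 1 < R) (hR' : R ≤ 3/2) (b : ℝ) (hb : b = 1 - R)
    (Z : ℕ → Finset ℂ)
    (hZcard : ∀ n, 1 ≤ n → (Z n).card = n)
    (hZzero : ∀ n, 1 ≤ n → ∀ z : ℂ,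
      z ∈ Z n ↔ ∀ s : ℂ, s ^ 2 = z ^ 2 - 1 →
        (z - (b : ℂ) + s) ^ n + (z - (b : ℂ) - s) ^ n - (-(b : ℂ)) ^ n = 0)
    (hZreal : ∀ n, 1 ≤ n → ∀ z ∈ Z n, ∃ x : ℝ, x ∈ Set.Icc (-1 : ℝ) 1 ∧ z = (x : ℂ)) :
    ∀ f : ℂ → ℝ, Continuous f →
      Tendsto (fun n : ℕ => (1 / (n : ℝ)) * ∑ z ∈ Z n, f z) atTop
        (nhds ((1 / Real.pi) *
          ∫ x in (-1 : ℝ)..1,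
            f (x : ℂ) * (1 - b * x) / (Real.sqrt (1 - x ^ 2) * (1 + b ^ 2 - 2 * b * x)))) := by
  intro f hf
  have hb_abs : |b| ≤ 1 / 2 := abs_le.2 ⟨by linarith, by linarith⟩
  simpa only [zeroDensity, smul_eq_mul, div_mul_eq_mul_div, mul_comm (f _)] using
    stmt_10_general hb_abs hZcard hZzero hf
end

section
/- Let b ∈ ℂ and n ∈ ℕ. For all z, s, w ∈ ℂ with s² = z² − 1, w² = b² + 1 − 2bz and w ≠ 0, one has (z − b + s)^n + (z − b − s)^n = 2·w^n·T_n((z − b)/w), where T_n is the n-th Chebyshev polynomial of the first kind evaluated at complex arguments. Consequently, for such z, f_n(z) = (z − b + s)^n + (z − b − s)^n − (−b)^n = 0 if and only if 2·T_n((z − b)/w) = (−b/w)^n. -/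
/-!
If `s² = z² - 1` and `w² = b² + 1 - 2bz`, then `z - b + s` and `z - b - s` have sum `2(z - b)` and
product `(z - b)² - s² = w²`. The power sums of two elements with product `w²` satisfy, up to the
scaling by `wⁿ`, the Chebyshev recurrence in their sum divided by `w`.
-/

section CommRing

open Polynomial

variable {R : Type*} [CommRing R] {x y w u : R}

theorem pow_add_two_add_pow_add_two (x y : R) (n : ℕ) :
    x ^ (n + 2) + y ^ (n + 2) =
      (x + y) * (x ^ (n + 1) + y ^ (n + 1)) - x * y * (x ^ n + y ^ n) := by
  ring

theorem pow_add_pow_eq_pow_mul_chebyshev_C_eval (hsum : x + y = w * u) (hprod : x * y = w ^ 2)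
    (n : ℕ) : x ^ n + y ^ n = w ^ n * (Chebyshev.C R n).eval u := by
  induction n using Nat.twoStepInduction with
  | zero => simp [one_add_one_eq_two]
  | one => simp [hsum]
  | more n ih ih' =>
    have hrec : (Chebyshev.C R (n + 2 : ℕ)).eval u =
        u * (Chebyshev.C R (n + 1 : ℕ)).eval u - (Chebyshev.C R n).eval u := by
      simp [Chebyshev.C_add_two]
    rw [pow_add_two_add_pow_add_two, ih, ih', hsum, hprod, hrec]
    ring

theorem chebyshev_C_eval_two_mul (n : ℤ) (u : R) :
    (Chebyshev.C R n).eval (2 * u) = 2 * (Chebyshev.T R n).eval u := by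
  simpa using congrArg (eval u) (Chebyshev.C_comp_two_mul_X R n)

theorem pow_add_pow_eq_two_mul_pow_mul_chebyshev_T_eval (hsum : x + y = 2 * (w * u))
    (hprod : x * y = w ^ 2) (n : ℕ) :
    x ^ n + y ^ n = 2 * w ^ n * (Chebyshev.T R n).eval u := by
  have hsum' : x + y = w * (2 * u) := by rw [hsum, mul_left_comm]
  rw [pow_add_pow_eq_pow_mul_chebyshev_C_eval hsum' hprod, chebyshev_C_eval_two_mul]
  ring

end CommRing

theorem stmt_11_general {K : Type*} [Field K] (b : K) (n : ℕ) (z s w : K)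
    (hs : s ^ 2 = z ^ 2 - 1) (hw : w ^ 2 = b ^ 2 + 1 - 2 * b * z) (hw₀ : w ≠ 0) :
    ((z - b + s) ^ n + (z - b - s) ^ n =
      2 * w ^ n * (Polynomial.Chebyshev.T K n).eval ((z - b) / w)) ∧
    ((z - b + s) ^ n + (z - b - s) ^ n - (-b) ^ n = 0 ↔
      2 * (Polynomial.Chebyshev.T K n).eval ((z - b) / w) = (-b / w) ^ n) := by
  have hsum : (z - b + s) + (z - b - s) = 2 * (w * ((z - b) / w)) := by
    rw [mul_div_cancel₀ _ hw₀]
    ring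
  have hprod : (z - b + s) * (z - b - s) = w ^ 2 := by
    linear_combination -hs - hw
  have hpow := pow_add_pow_eq_two_mul_pow_mul_chebyshev_T_eval hsum hprod n
  refine ⟨hpow, ?_⟩
  rw [hpow, sub_eq_zero, div_pow, eq_div_iff (pow_ne_zero n hw₀), mul_right_comm]

/-- Let `b ∈ ℂ` and `n ∈ ℕ`. For all `z, s, w ∈ ℂ` with `s² = z² − 1`,
`w² = b² + 1 − 2bz` and `w ≠ 0`, one has
`(z − b + s)ⁿ + (z − b − s)ⁿ = 2·wⁿ·T_n((z − b)/w)`, where `T_n` is the `n`-th Chebyshev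
polynomial of the first kind. Consequently `f_n(z) = 0` iff `2·T_n((z − b)/w) = (−b/w)ⁿ`. -/
theorem stmt_11 (b : ℂ) (n : ℕ) :
    ∀ z s w : ℂ, s ^ 2 = z ^ 2 - 1 → w ^ 2 = b ^ 2 + 1 - 2 * b * z → w ≠ 0 →
      ((z - b + s) ^ n + (z - b - s) ^ n =
        2 * w ^ n * (Polynomial.Chebyshev.T ℂ n).eval ((z - b) / w)) ∧
      ((z - b + s) ^ n + (z - b - s) ^ n - (-b) ^ n = 0 ↔
        2 * (Polynomial.Chebyshev.T ℂ n).eval ((z - b) / w) = (-b / w) ^ n) :=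
  stmt_11_general b n
end

section
/- Let b be a nonzero complex number and n ≥ 1. If z, s ∈ ℂ satisfy s² = z² − 1, b² + 1 − 2bz ≠ 0, and (z − b + s)^n + (z − b − s)^n = 0, then (z − b)²/(b² + 1 − 2bz) is a real number in [0, 1). In other words, every zero of the shifted Faber polynomial other than c = (b + 1/b)/2 lies on the set 𝒜 = {z : (z − b)²/(b² + 1 − 2bz) ∈ [0,1]}. -/
/-!
Put `a = z - b`, so that `b² + 1 - 2bz = a² - s² = (a + s)(a - s)`. A zero of
`(a + s)ⁿ + (a - s)ⁿ` forces `‖a + s‖ = ‖a - s‖`, i.e. `a` and `s` are orthogonal as plane vectors,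
and then `a² / (a² - s²) = (‖a‖ / ‖a + s‖)²`. This quotient is less than `1` because the midpoint
`a` of two distinct points `a ± s` of a circle centred at `0` lies strictly inside it.
-/

open scoped ComplexConjugate

theorem norm_eq_norm_of_pow_add_pow_eq_zero {K : Type*} [NormedDivisionRing K] {p q : K} {n : ℕ}
    (hn : n ≠ 0) (h : p ^ n + q ^ n = 0) : ‖p‖ = ‖q‖ := by
  have hpow : ‖p‖ ^ n = ‖q‖ ^ n := by
    rw [← norm_pow, ← norm_pow, eq_neg_of_add_eq_zero_left h, norm_neg]
  exact (pow_left_inj₀ (norm_nonneg p) (norm_nonneg q) hn).1 hpow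

theorem ne_zero_of_add_pow_add_sub_pow_eq_zero {R : Type*} [Ring R] [NoZeroDivisors R] [CharZero R]
    {a s : R} {n : ℕ} (h : (a + s) ^ n + (a - s) ^ n = 0) (has : a ^ 2 - s ^ 2 ≠ 0) : s ≠ 0 := by
  rintro rfl
  rw [add_zero, sub_zero, add_self_eq_zero] at h
  exact has (by rw [eq_zero_of_pow_eq_zero h, sub_self])

theorem norm_lt_norm_add_of_norm_add_eq_norm_sub {E : Type*} [NormedAddCommGroup E]
    [NormedSpace ℝ E] [StrictConvexSpace ℝ E] {a s : E} (h : ‖a + s‖ = ‖a - s‖) (hs : s ≠ 0) :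
    ‖a‖ < ‖a + s‖ := by
  have hne : a + s ≠ a - s := by
    have : IsAddTorsionFree E := .of_isTorsionFree ℝ E
    rw [sub_eq_add_neg, ne_eq, add_right_inj, self_eq_neg]
    exact hs
  have hmid : (1 / 2 : ℝ) • ((a + s) + (a - s)) = a := by module
  simpa only [hmid] using (norm_midpoint_lt_iff h).2 hne

section RCLike

variable {𝕜 : Type*} [RCLike 𝕜] {a s : 𝕜}

theorem mul_conj_add_conj_mul_eq_zero_of_norm_add_eq_norm_sub (h : ‖a + s‖ = ‖a - s‖) :
    a * conj s + conj a * s = 0 := by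
  have hsq : (a + s) * conj (a + s) = (a - s) * conj (a - s) := by
    rw [RCLike.mul_conj, RCLike.mul_conj, h]
  rw [map_add, map_sub] at hsq
  linear_combination hsq / 2

theorem sq_mul_norm_add_sq_of_norm_add_eq_norm_sub (h : ‖a + s‖ = ‖a - s‖) :
    a ^ 2 * (‖a + s‖ : 𝕜) ^ 2 = (‖a‖ : 𝕜) ^ 2 * (a ^ 2 - s ^ 2) := by
  rw [← RCLike.mul_conj, ← RCLike.mul_conj, map_add]
  linear_combination
    (a ^ 2 + a * s) * mul_conj_add_conj_mul_eq_zero_of_norm_add_eq_norm_sub h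

end RCLike

/-- Let `b ≠ 0` and `n ≥ 1`. If `z, s ∈ ℂ` satisfy `s² = z² − 1`,
`b² + 1 − 2bz ≠ 0`, and `(z − b + s)ⁿ + (z − b − s)ⁿ = 0`, then
`(z − b)²/(b² + 1 − 2bz)` is a real number in `[0, 1)`: every zero of the shifted Faber
polynomial other than `c = (b + 1/b)/2` lies on the arc `𝒜`. -/
theorem stmt_12 (b : ℂ) (hb : b ≠ 0) (n : ℕ) (hn : 1 ≤ n) :
    ∀ z s : ℂ, s ^ 2 = z ^ 2 - 1 → b ^ 2 + 1 - 2 * b * z ≠ 0 →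
      (z - b + s) ^ n + (z - b - s) ^ n = 0 →
      ∃ r : ℝ, 0 ≤ r ∧ r < 1 ∧ (z - b) ^ 2 / (b ^ 2 + 1 - 2 * b * z) = (r : ℂ) := by
  intro z s hs hV h
  have hV_eq : b ^ 2 + 1 - 2 * b * z = (z - b) ^ 2 - s ^ 2 := by linear_combination hs
  rw [hV_eq] at hV ⊢
  have hnorm : ‖z - b + s‖ = ‖z - b - s‖ :=
    norm_eq_norm_of_pow_add_pow_eq_zero (Nat.one_le_iff_ne_zero.1 hn) h
  have hlt : ‖z - b‖ < ‖z - b + s‖ :=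
    norm_lt_norm_add_of_norm_add_eq_norm_sub hnorm (ne_zero_of_add_pow_add_sub_pow_eq_zero h hV)
  have hpos : 0 < ‖z - b + s‖ := (norm_nonneg _).trans_lt hlt
  have hpos' : (‖z - b + s‖ : ℂ) ^ 2 ≠ 0 := by exact_mod_cast (pow_pos hpos 2).ne'
  refine ⟨(‖z - b‖ / ‖z - b + s‖) ^ 2, by positivity, ?_, ?_⟩
  · exact pow_lt_one₀ (by positivity) ((div_lt_one hpos).2 hlt) two_ne_zero
  · rw [Complex.ofReal_pow, Complex.ofReal_div, div_pow, div_eq_div_iff hV hpos']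
    exact sq_mul_norm_add_sq_of_norm_add_eq_norm_sub hnorm
end
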